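/- arXiv:2111.08949 — 3 statements merged into one kernel-verified Lean document; each statement's English description precedes it below -/
import Mathlib

section
/- Let k ∈ ℕ and let λ_1, …, λ_k be positive integers, and set B = B(λ_1, …, λ_k). Then χ(ℝ^n_∞, B) = (d(ℤ, B)^{−1} + o(1))^n as n → ∞; that is, lim_{n→∞} χ(ℝ^n_∞, B)^{1/n} = d(ℤ, B)^{−1}. -/
open Set Filter

/-- The set `A` (in the metric space `β`) contains an isometric copy of the
metric (sub)space `M` (a subset of the metric space `α`). -/
def HasCopy {α β : Type*} [MetricSpace α] [MetricSpace β] (M : Set α) (A : Set β) : Prop :=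
  ∃ f : α → β, (∀ x ∈ M, ∀ y ∈ M, dist (f x) (f y) = dist x y) ∧ f '' M ⊆ A

/-- The chromatic number of `ℝ^n` with the max-norm metric and forbidden subspace `M`:
the least number of colours such that some colouring has no monochromatic copy of `M`. -/
noncomputable def chrom {α : Type*} [MetricSpace α] (M : Set α) (n : ℕ) : ℕ :=
  sInf {N : ℕ | ∃ c : (Fin n → ℝ) → Fin N, ∀ i : Fin N, ¬ HasCopy M {x | c x = i}}

/-- The integer baton `B(λ₁,…,λ_k)`: the set of partial sums `σ₀,…,σ_k`. -/
def batonZ (lam : ℕ → ℤ) (k : ℕ) : Set ℤ :=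
  (fun r => ∑ j ∈ Finset.range r, lam j) '' Set.Iic k

/-- `A ⊆ ℤ` is `S`-tr-free: it contains no translate of `S` and no translate of `-S`. -/
def TrFreeZ (S A : Set ℤ) : Prop :=
  ∀ x : ℤ, ¬ ((fun s => s + x) '' S ⊆ A) ∧ ¬ ((fun s => -s + x) '' S ⊆ A)

/-- The upper density of a set of integers. -/
noncomputable def upperDensity (A : Set ℤ) : ℝ :=
  Filter.limsup
    (fun N : ℕ => ((A ∩ Set.Icc (-(N : ℤ)) (N : ℤ)).ncard : ℝ) / (2 * N + 1)) Filter.atTop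

/-- `d(ℤ, S)`: the supremum of upper densities of `S`-tr-free subsets of `ℤ`. -/
noncomputable def densZ (S : Set ℤ) : ℝ :=
  sSup (upperDensity '' {A : Set ℤ | TrFreeZ S A})

/-!
*Lower bound.* Order `ℝ × X` causally, as a space-time. Chains of the order project isometrically
to `ℝ` and antichains to `X`, so by Mirsky's theorem the largest size of a copy-free subset is
submultiplicative for products. For the `n`-th power of an interval `I` of `m` integers this bounds
every colour class by the `n`-th power of the largest copy-free subset of `I`; repeating that subset
with period `m + diam S` bounds its size by `d(ℤ, S) * (m + diam S)`. Now let `m → ∞`.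

*Upper bound.* Along some coordinate, an isometric copy of `S` in `ℝ^n_∞` is a translate of `S` or
of `-S`. Take `T ⊆ ℤ/P` whose preimage in `ℤ` is tr-free of density close to `d(ℤ, S)`, cover
`(ℤ/P)^n` greedily by `(P / #T)^n * log (P^n) + 1` translates of `T^n`, and colour `x` by a
translate containing `⌊x⌋` mod `P`: a monochromatic copy of `S` would yield a translate of `±S`
inside the preimage of `T`. The factor `log (P^n)` disappears in the `n`-th root.
-/

open scoped Finset Pointwise Topology

section Mirsky

variable {α : Type*} [PartialOrder α]

open Classical in
lemma exists_isChain_card_succ_of_subset_filter_not_minimal {A C : Finset α}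
    (hC : IsChain (· ≤ ·) (C : Set α)) (hne : C.Nonempty)
    (hCA : C ⊆ A.filter fun x => ¬ Minimal (· ∈ A) x) :
    ∃ C' ⊆ A, IsChain (· ≤ ·) (C' : Set α) ∧ #C' = #C + 1 := by
  obtain ⟨c, hc⟩ := C.exists_minimal hne
  obtain ⟨hcA, hcmin⟩ := Finset.mem_filter.mp (hCA hc.prop)
  obtain ⟨b, hbc, hbA⟩ := exists_lt_of_not_minimal hcA hcmin
  have hb : ∀ x ∈ C, b < x := fun x hx => hbc.trans_le <|
    (hC.total hc.prop hx).elim id fun hxc => hc.le_of_le hx hxc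
  refine ⟨insert b C, ?_, ?_, Finset.card_insert_of_notMem fun hbC => (hb b hbC).false⟩
  · exact Finset.insert_subset hbA (hCA.trans (Finset.filter_subset _ _))
  · rw [Finset.coe_insert]
    exact hC.insert fun x hx _ => Or.inl (hb x hx).le

theorem card_le_mul_of_isChain_of_isAntichain {A : Finset α} {M L : ℕ}
    (hchain : ∀ C ⊆ A, IsChain (· ≤ ·) (C : Set α) → #C ≤ M)
    (hanti : ∀ B ⊆ A, IsAntichain (· ≤ ·) (B : Set α) → #B ≤ L) : #A ≤ M * L := by
  classical
  induction M generalizing A with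
  | zero =>
    have hA : A = ∅ := Finset.eq_empty_of_forall_notMem fun x hx => by
      simpa using hchain {x} (Finset.singleton_subset_iff.mpr hx) (by simp)
    simp [hA]
  | succ M ih =>
    have hmin : #{x ∈ A | Minimal (· ∈ A) x} ≤ L := by
      refine hanti _ (Finset.filter_subset _ _) ?_
      refine (setOfPred_minimal_antichain (· ∈ A)).subset fun x hx => ?_
      exact (Finset.mem_filter.mp hx).2
    have hrest : #{x ∈ A | ¬ Minimal (· ∈ A) x} ≤ M * L := by
      refine ih (fun C hCA hC => ?_) fun B hB => hanti B (hB.trans (Finset.filter_subset _ _))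
      rcases C.eq_empty_or_nonempty with rfl | hne
      · simp
      · obtain ⟨C', hC'A, hC', hcard⟩ :=
          exists_isChain_card_succ_of_subset_filter_not_minimal hC hne hCA
        have := hchain C' hC'A hC'
        omega
    rw [← Finset.card_filter_add_card_filter_not (Minimal (· ∈ A))]
    linarith

end Mirsky

section Copies

variable {α β γ ι : Type*} [MetricSpace α] [MetricSpace β] [MetricSpace γ] {M : Set α}

lemma HasCopy.of_image [Nonempty β] {A : Set β} {g : β → γ}
    (hg : ∀ x ∈ A, ∀ y ∈ A, dist (g x) (g y) = dist x y) (h : HasCopy M (g '' A)) :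
    HasCopy M A := by
  obtain ⟨f, hf, hfA⟩ := h
  have hpre : ∀ x ∈ M, ∃ y ∈ A, g y = f x := fun x hx => hfA ⟨x, hx, rfl⟩
  choose! f' hf'A hf' using hpre
  refine ⟨f', fun x hx y hy => ?_, Set.image_subset_iff.mpr hf'A⟩
  rw [← hg _ (hf'A x hx) _ (hf'A y hy), hf' x hx, hf' y hy, hf x hx y hy]

open Classical in
/-- The largest size of a subset of the finite set `K` containing no isometric copy of `M`. -/
noncomputable def copyFreeNum (M : Set α) (K : Finset β) : ℕ :=
  (K.powerset.filter fun B : Finset β => ¬ HasCopy M (B : Set β)).sup Finset.card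

lemma card_le_copyFreeNum {B K : Finset β} (hBK : B ⊆ K) (hB : ¬ HasCopy M (B : Set β)) :
    #B ≤ copyFreeNum M K := by
  classical
  exact Finset.le_sup (f := Finset.card)
    (Finset.mem_filter.mpr ⟨Finset.mem_powerset.mpr hBK, hB⟩)

lemma copyFreeNum_le {K : Finset β} {r : ℕ}
    (h : ∀ B ⊆ K, ¬ HasCopy M (B : Set β) → #B ≤ r) : copyFreeNum M K ≤ r := by
  classical
  refine Finset.sup_le fun B hB => ?_
  obtain ⟨hBK, hB⟩ := Finset.mem_filter.mp hB
  exact h B (Finset.mem_powerset.mp hBK) hB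

lemma card_le_copyFreeNum_of_dist_eq {B : Finset β} {K : Finset γ} {g : β → γ}
    (hg : ∀ x ∈ B, ∀ y ∈ B, dist (g x) (g y) = dist x y) (hgK : ∀ x ∈ B, g x ∈ K)
    (hB : ¬ HasCopy M (B : Set β)) : #B ≤ copyFreeNum M K := by
  classical
  rcases B.eq_empty_or_nonempty with rfl | ⟨x₀, -⟩
  · simp
  have : Nonempty β := ⟨x₀⟩
  have hinj : Set.InjOn g B := fun x hx y hy hxy => by
    rw [← dist_eq_zero, ← hg x hx y hy, hxy, dist_self]
  rw [← Finset.card_image_of_injOn hinj]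
  refine card_le_copyFreeNum (Finset.image_subset_iff.mpr hgK) fun h => hB ?_
  rw [Finset.coe_image] at h
  exact h.of_image hg

/-- `c` is a proper colouring with respect to `M`: no colour class contains an isometric copy
of `M`. For `β = Fin n → ℝ` and `ι = Fin N` this is the condition in the definition of `chrom`. -/
def IsProperColoring (M : Set α) (c : β → ι) : Prop :=
  ∀ i, ¬ HasCopy M {x | c x = i}

lemma HasCopy.mono {A A' : Set β} (h : HasCopy M A) (hA : A ⊆ A') : HasCopy M A' :=
  let ⟨f, hf, hfA⟩ := h
  ⟨f, hf, hfA.trans hA⟩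

lemma IsProperColoring.card_le [Fintype ι] {c : β → ι} (hc : IsProperColoring M c)
    (K : Finset β) : #K ≤ copyFreeNum M K * Fintype.card ι := by
  classical
  refine Finset.card_le_mul_card_image_of_maps_to (fun x _ => Finset.mem_univ (c x)) _
    fun i _ => card_le_copyFreeNum (Finset.filter_subset _ _) fun h => hc i (h.mono ?_)
  exact fun x hx => (Finset.mem_filter.mp hx).2

lemma IsProperColoring.exists_fin [Fintype ι] {c : β → ι} (hc : IsProperColoring M c) :
    ∃ c' : β → Fin (Fintype.card ι), IsProperColoring M c' := by
  let e := Fintype.equivFin ι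
  refine ⟨e ∘ c, fun i h => hc (e.symm i) (h.mono fun x hx => ?_)⟩
  exact (e.symm_apply_eq.mpr (Eq.symm hx)).symm

lemma IsProperColoring.exists_fin_chrom {n N : ℕ} {c : (Fin n → ℝ) → Fin N}
    (hc : IsProperColoring M c) :
    ∃ c' : (Fin n → ℝ) → Fin (chrom M n), IsProperColoring M c' :=
  Nat.sInf_mem (s := {N | ∃ c : (Fin n → ℝ) → Fin N, IsProperColoring M c}) ⟨N, c, hc⟩

lemma IsProperColoring.chrom_le {n N : ℕ} {c : (Fin n → ℝ) → Fin N}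
    (hc : IsProperColoring M c) : chrom M n ≤ N :=
  Nat.sInf_le ⟨c, hc⟩

end Copies

section Product

variable {α X : Type*} [MetricSpace α] [MetricSpace X]

/-- The causal order on the space-time `ℝ × X`: `p` precedes `q` if a signal of speed at most one
can travel from `p` to `q`. In the max metric, comparable points are at the distance of their time
coordinates and incomparable points at the distance of their space coordinates. -/
abbrev causalOrder (X : Type*) [MetricSpace X] : PartialOrder (ℝ × X) where
  le p q := dist p.2 q.2 ≤ q.1 - p.1
  le_refl p := by simp
  le_trans p q r hpq hqr := by linarith [dist_triangle p.2 q.2 r.2]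
  le_antisymm p q hpq hqp := by
    have hpos := dist_nonneg (x := p.2) (y := q.2)
    rw [dist_comm] at hqp
    exact Prod.ext (by linarith) (dist_le_zero.mp (by linarith))

lemma dist_eq_dist_fst_of_isChain {C : Set (ℝ × X)} (hC : IsChain (causalOrder X).le C)
    {p q : ℝ × X} (hp : p ∈ C) (hq : q ∈ C) : dist p.1 q.1 = dist p q := by
  refine (max_eq_left ?_).symm
  rcases eq_or_ne p q with rfl | hne
  · simp
  have hpq : dist p.2 q.2 ≤ q.1 - p.1 ∨ dist q.2 p.2 ≤ p.1 - q.1 := hC hp hq hne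
  rcases hpq with h | h
  · rw [dist_comm p.1]
    exact h.trans (le_abs_self _)
  · rw [dist_comm p.2]
    exact h.trans (le_abs_self _)

lemma dist_eq_dist_snd_of_isAntichain {B : Set (ℝ × X)} (hB : IsAntichain (causalOrder X).le B)
    {p q : ℝ × X} (hp : p ∈ B) (hq : q ∈ B) : dist p.2 q.2 = dist p q := by
  refine (max_eq_right ?_).symm
  rcases eq_or_ne p q with rfl | hne
  · simp
  have hpq : q.1 - p.1 < dist p.2 q.2 := not_le.mp (hB hp hq hne)
  have hqp : p.1 - q.1 < dist q.2 p.2 := not_le.mp (hB hq hp hne.symm)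
  rw [dist_comm] at hqp
  exact abs_le.mpr ⟨by linarith, hqp.le⟩

theorem copyFreeNum_product_le (M : Set α) (I : Finset ℝ) (K : Finset X) :
    copyFreeNum M (I ×ˢ K) ≤ copyFreeNum M I * copyFreeNum M K := by
  refine copyFreeNum_le fun A hA hfree => ?_
  have hfree' : ∀ B ⊆ A, ¬ HasCopy M (B : Set (ℝ × X)) := fun B hB h =>
    hfree (h.mono (Finset.coe_subset.mpr hB))
  let := causalOrder X
  refine card_le_mul_of_isChain_of_isAntichain (fun C hCA hC => ?_) fun B hBA hB => ?_
  · exact card_le_copyFreeNum_of_dist_eq (fun p hp q hq => dist_eq_dist_fst_of_isChain hC hp hq)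
      (fun p hp => (Finset.mem_product.mp (hA (hCA hp))).1) (hfree' C hCA)
  · exact card_le_copyFreeNum_of_dist_eq
      (fun p hp q hq => dist_eq_dist_snd_of_isAntichain hB hp hq)
      (fun p hp => (Finset.mem_product.mp (hA (hBA hp))).2) (hfree' B hBA)

lemma dist_zero_tail {n : ℕ} (x y : Fin (n + 1) → X) :
    dist (x 0, Fin.tail x) (y 0, Fin.tail y) = dist x y := by
  refine le_antisymm (max_le (dist_le_pi_dist x y 0) ?_) ?_
  · exact (dist_pi_le_iff dist_nonneg).mpr fun i => dist_le_pi_dist x y i.succ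
  · refine (dist_pi_le_iff dist_nonneg).mpr fun i => Fin.cases (le_max_left _ _) (fun i => ?_) i
    exact (dist_le_pi_dist (Fin.tail x) (Fin.tail y) i).trans (le_max_right _ _)

theorem copyFreeNum_piFinset_le (M : Set α) (I : Finset ℝ) (n : ℕ) :
    copyFreeNum M (Fintype.piFinset fun _ : Fin n => I) ≤ copyFreeNum M I ^ n := by
  induction n with
  | zero => exact copyFreeNum_le fun B _ _ => by simpa using B.card_le_one_of_subsingleton
  | succ n ih =>
    have hsplit : copyFreeNum M (Fintype.piFinset fun _ : Fin (n + 1) => I) ≤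
        copyFreeNum M (I ×ˢ Fintype.piFinset fun _ : Fin n => I) :=
      copyFreeNum_le fun B hB hfree => by
        refine card_le_copyFreeNum_of_dist_eq (fun x _ y _ => dist_zero_tail x y)
          (fun x hx => ?_) hfree
        have hx := Fintype.mem_piFinset.mp (hB hx)
        exact Finset.mem_product.mpr ⟨hx 0, Fintype.mem_piFinset.mpr fun i => hx i.succ⟩
    calc _ ≤ copyFreeNum M I * copyFreeNum M (Fintype.piFinset fun _ : Fin n => I) :=
          hsplit.trans (copyFreeNum_product_le M I _)
      _ ≤ copyFreeNum M I * copyFreeNum M I ^ n := Nat.mul_le_mul_left _ ih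
      _ = copyFreeNum M I ^ (n + 1) := (pow_succ' _ _).symm

end Product

section Covering

variable {G : Type*} [AddGroup G] [Fintype G] [DecidableEq G]

lemma exists_card_mul_card_le_card_inter_vadd (U T : Finset G) :
    ∃ g : G, #U * #T ≤ Fintype.card G * #(U ∩ (g +ᵥ T)) := by
  have hsum : ∑ g : G, #(U ∩ (g +ᵥ T)) = #U * #T := by
    simp_rw [Finset.card_inter_vadd]
    rw [← Finset.card_neg T, ← Finset.card_product]
    exact (Finset.card_eq_sum_card_fiberwise fun _ _ => Finset.mem_coe.mpr (Finset.mem_univ _)).symm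
  obtain ⟨g, -, hg⟩ := Finset.exists_le_of_sum_le (s := Finset.univ) ⟨0, Finset.mem_univ _⟩
    (f := fun _ : G => #U * #T) (g := fun g => Fintype.card G * #(U ∩ (g +ᵥ T)))
    (by rw [Finset.sum_const, ← Finset.mul_sum, hsum, smul_eq_mul, Finset.card_univ])
  exact ⟨g, hg⟩

lemma exists_card_compl_add_le (T : Finset G) (r : ℕ) :
    ∃ X : Finset G, #X ≤ r ∧
      (#(X + T)ᶜ : ℝ) ≤ Fintype.card G * (1 - (#T : ℝ) / Fintype.card G) ^ r := by
  induction r with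
  | zero => exact ⟨∅, by simp⟩
  | succ r ih =>
    obtain ⟨X, hXr, hX⟩ := ih
    set U := (X + T)ᶜ
    set τ : ℝ := (#T : ℝ) / Fintype.card G
    obtain ⟨g, hg⟩ := exists_card_mul_card_le_card_inter_vadd U T
    have hG : (0 : ℝ) < Fintype.card G := by exact_mod_cast Fintype.card_pos
    have hτ : τ ≤ 1 := (div_le_one hG).mpr (by exact_mod_cast T.card_le_univ)
    have hinter : #U * τ ≤ #(U ∩ (g +ᵥ T)) := by
      rw [← mul_div_assoc, div_le_iff₀' hG]
      exact_mod_cast hg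
    have hsdiff : (#(U \ (g +ᵥ T)) : ℝ) = #U - #(U ∩ (g +ᵥ T)) := by
      rw [Finset.card_sdiff, Nat.cast_sub (Finset.card_le_card Finset.inter_subset_right),
        Finset.inter_comm]
    have hcompl : (insert g X + T)ᶜ = U \ (g +ᵥ T) := by
      rw [Finset.insert_eq, Finset.union_add, Finset.singleton_add, Finset.compl_union,
        Finset.inter_comm, Finset.sdiff_eq_inter_compl]
    refine ⟨insert g X, (Finset.card_insert_le g X).trans (by omega), ?_⟩
    calc (#(insert g X + T)ᶜ : ℝ) ≤ #U * (1 - τ) := by rw [hcompl, hsdiff]; linarith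
      _ ≤ Fintype.card G * (1 - τ) ^ r * (1 - τ) :=
          mul_le_mul_of_nonneg_right hX (sub_nonneg.mpr hτ)
      _ = Fintype.card G * (1 - τ) ^ (r + 1) := by ring

lemma mul_one_sub_inv_pow_lt_one {x y : ℝ} {r : ℕ} (hx : 0 < x) (hy : 1 ≤ y)
    (hr : y * Real.log x < r) : x * (1 - y⁻¹) ^ r < 1 := by
  have hy0 : 0 < y := zero_lt_one.trans_le hy
  have hlog : Real.log x < r * y⁻¹ := by
    rwa [← div_eq_mul_inv, lt_div_iff₀' hy0]
  calc x * (1 - y⁻¹) ^ r ≤ x * Real.exp (-y⁻¹) ^ r := by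
        have hy' : 0 ≤ 1 - y⁻¹ := sub_nonneg.mpr (inv_le_one_of_one_le₀ hy)
        gcongr
        exact Real.one_sub_le_exp_neg _
    _ = Real.exp (Real.log x - r * y⁻¹) := by
        rw [← Real.exp_nat_mul, mul_neg, sub_eq_add_neg, Real.exp_add, Real.exp_log hx]
    _ < 1 := Real.exp_lt_one_iff.mpr (by linarith)

theorem exists_card_le_add_eq_univ {T : Finset G} (hT : T.Nonempty) :
    ∃ X : Finset G, X + T = Finset.univ ∧
      (#X : ℝ) ≤ (Fintype.card G / #T : ℝ) * Real.log (Fintype.card G) + 1 := by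
  have hG : (1 : ℝ) ≤ Fintype.card G := by exact_mod_cast Fintype.card_pos
  have hTG : (1 : ℝ) ≤ Fintype.card G / #T :=
    (one_le_div (by exact_mod_cast hT.card_pos)).mpr (by exact_mod_cast T.card_le_univ)
  set y := (Fintype.card G / #T : ℝ) * Real.log (Fintype.card G)
  have hy : 0 ≤ y := mul_nonneg (by positivity) (Real.log_nonneg hG)
  obtain ⟨X, hXr, hX⟩ := exists_card_compl_add_le T (⌊y⌋₊ + 1)
  refine ⟨X, ?_, ?_⟩
  · have hlt := mul_one_sub_inv_pow_lt_one (zero_lt_one.trans_le hG) hTG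
      (r := ⌊y⌋₊ + 1) (by exact_mod_cast Nat.lt_floor_add_one y)
    rw [inv_div] at hlt
    rw [← Finset.compl_eq_empty_iff, ← Finset.card_eq_zero, ← Nat.lt_one_iff]
    exact_mod_cast hX.trans_lt hlt
  · calc (#X : ℝ) ≤ ⌊y⌋₊ + 1 := by exact_mod_cast hXr
      _ ≤ y + 1 := by linarith [Nat.floor_le hy]

end Covering

section UpperDensity

lemma ncard_inter_Icc_div_le_one (A : Set ℤ) (N : ℕ) :
    ((A ∩ Set.Icc (-(N : ℤ)) (N : ℤ)).ncard : ℝ) / (2 * N + 1) ≤ 1 := by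
  have hcard : (A ∩ Set.Icc (-(N : ℤ)) (N : ℤ)).ncard ≤ 2 * N + 1 :=
    calc _ ≤ (Set.Icc (-(N : ℤ)) (N : ℤ)).ncard :=
          Set.ncard_le_ncard Set.inter_subset_right (Set.finite_Icc _ _)
      _ = 2 * N + 1 := by
          rw [← Finset.coe_Icc, Set.ncard_coe_finset, Int.card_Icc]
          omega
  rw [div_le_one (by positivity)]
  exact_mod_cast hcard

lemma isCoboundedUnder_ncard_inter_Icc_div (A : Set ℤ) :
    IsCoboundedUnder (· ≤ ·) atTop
      fun N : ℕ => ((A ∩ Set.Icc (-(N : ℤ)) (N : ℤ)).ncard : ℝ) / (2 * N + 1) :=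
  (isBoundedUnder_of ⟨0, fun _ => by positivity⟩).isCoboundedUnder_le

lemma upperDensity_le_one (A : Set ℤ) : upperDensity A ≤ 1 :=
  limsup_le_of_le (isCoboundedUnder_ncard_inter_Icc_div A)
    (Eventually.of_forall (ncard_inter_Icc_div_le_one A))

lemma le_upperDensity_of_tendsto {A : Set ℤ} {u : ℕ → ℝ} {c : ℝ} (hu : Tendsto u atTop (𝓝 c))
    (h : ∀ N : ℕ, u N ≤ ((A ∩ Set.Icc (-(N : ℤ)) (N : ℤ)).ncard : ℝ) / (2 * N + 1)) :
    c ≤ upperDensity A := by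
  rw [← hu.limsup_eq]
  exact limsup_le_limsup (Eventually.of_forall h) hu.isCoboundedUnder_le
    (isBoundedUnder_of ⟨1, ncard_inter_Icc_div_le_one A⟩)

lemma TrFreeZ.upperDensity_le_densZ {S A : Set ℤ} (hA : TrFreeZ S A) :
    upperDensity A ≤ densZ S :=
  le_csSup ⟨1, by rintro _ ⟨A, -, rfl⟩; exact upperDensity_le_one A⟩ ⟨A, hA, rfl⟩

variable {P : ℕ} [NeZero P]

lemma div_sub_one_le_card_filter_intCast_eq (a b : ℤ) (v : ZMod P) :
    (b - a : ℝ) / P - 1 ≤ #{x ∈ Finset.Ioc a b | ((x : ℤ) : ZMod P) = v} := by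
  obtain ⟨v, rfl⟩ := ZMod.intCast_surjective v
  have hP : (0 : ℤ) < P := by exact_mod_cast NeZero.pos P
  simp_rw [ZMod.intCast_eq_intCast_iff]
  have hcard : (⌊((b : ℚ) - v) / P⌋ - ⌊((a : ℚ) - v) / P⌋ : ℤ) ≤
      #{x ∈ Finset.Ioc a b | x ≡ v [ZMOD P]} := by
    rw [Int.Ioc_filter_modEq_card a b hP v]
    exact le_max_left _ _
  have hfloor : (b - a : ℚ) / P - 1 ≤ ⌊((b : ℚ) - v) / P⌋ - ⌊((a : ℚ) - v) / P⌋ := by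
    have hb := Int.lt_floor_add_one (((b : ℚ) - v) / P)
    have ha := Int.floor_le (((a : ℚ) - v) / P)
    have hsub : ((b : ℚ) - v) / P - (a - v) / P = (b - a) / P := by ring
    linarith
  have hle : (b - a : ℚ) / P - 1 ≤ #{x ∈ Finset.Ioc a b | x ≡ v [ZMOD P]} :=
    hfloor.trans (by exact_mod_cast hcard)
  exact_mod_cast hle

lemma card_div_le_upperDensity_preimage_intCast (T : Finset (ZMod P)) :
    (#T / P : ℝ) ≤ upperDensity ((Int.cast : ℤ → ZMod P) ⁻¹' T) := by
  have hP : (0 : ℝ) < P := by exact_mod_cast NeZero.pos P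
  have hlim : Tendsto (fun N : ℕ => (#T / P : ℝ) - #T / (2 * N + 1)) atTop (𝓝 (#T / P)) := by
    have hdenom : Tendsto (fun N : ℕ => (2 * N + 1 : ℝ)) atTop atTop :=
      tendsto_atTop_add_const_right _ _
        (tendsto_natCast_atTop_atTop.const_mul_atTop zero_lt_two)
    simpa using (hdenom.const_div_atTop (#T : ℝ)).const_sub (#T / P : ℝ)
  refine le_upperDensity_of_tendsto hlim fun N => ?_
  set W := Finset.Ioc (-(N : ℤ) - 1) N
  have hW : (Int.cast : ℤ → ZMod P) ⁻¹' T ∩ Set.Icc (-(N : ℤ)) N =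
      ({x ∈ W | ((x : ℤ) : ZMod P) ∈ T} : Finset ℤ) := by
    ext x
    simp only [W, Set.mem_inter_iff, Set.mem_preimage, Finset.mem_coe, Set.mem_Icc,
      Finset.mem_filter, Finset.mem_Ioc]
    grind
  have hcard : #T * ((2 * N + 1 : ℝ) / P - 1) ≤ #{x ∈ W | ((x : ℤ) : ZMod P) ∈ T} := by
    rw [← nsmul_eq_mul, ← Finset.sum_card_fiberwise_eq_card_filter, Nat.cast_sum]
    refine Finset.card_nsmul_le_sum _ _ _ fun v _ => ?_
    have hlen : ((N : ℤ) : ℝ) - ((-(N : ℤ) - 1 : ℤ) : ℝ) = 2 * N + 1 := by push_cast; ring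
    exact hlen ▸ div_sub_one_le_card_filter_intCast_eq _ _ v
  rw [hW, Set.ncard_coe_finset, le_div_iff₀ (by positivity)]
  refine le_trans (le_of_eq ?_) hcard
  field_simp

end UpperDensity

section Periodization

variable {S A : Set ℤ} {F : Finset ℤ} {P : ℕ} {a b l m : ℤ}

lemma TrFreeZ.mono {A' : Set ℤ} (hA : TrFreeZ S A) (hA' : A' ⊆ A) : TrFreeZ S A' := fun x =>
  ⟨fun h => (hA x).1 (h.trans hA'), fun h => (hA x).2 (h.trans hA')⟩

lemma TrFreeZ.nonempty (hA : TrFreeZ S A) : S.Nonempty :=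
  Set.nonempty_iff_ne_empty.mpr fun hS => (hA 0).1 (by simp [hS])

lemma trFreeZ_empty (hS : S.Nonempty) : TrFreeZ S ∅ := by
  simp only [TrFreeZ, Set.subset_empty_iff, Set.image_eq_empty, hS.ne_empty, not_false_eq_true,
    and_self, implies_true]

lemma trFreeZ_singleton (hS : S.Nontrivial) (z : ℤ) : TrFreeZ S {z} := fun _ =>
  ⟨fun h => Set.not_nontrivial_singleton <|
      (hS.image fun _ _ => add_right_cancel).mono h,
    fun h => Set.not_nontrivial_singleton <|
      (hS.image fun _ _ h => neg_injective (add_right_cancel h)).mono h⟩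

lemma trFreeZ_of_not_hasCopy
    (h : ¬ HasCopy ((fun z : ℤ => (z : ℝ)) '' S) ((fun z : ℤ => (z : ℝ)) '' A)) :
    TrFreeZ S A := by
  refine fun x => ⟨fun hx => h ⟨fun r => r + x, by simp, ?_⟩,
    fun hx => h ⟨fun r => -r + x, by simp, ?_⟩⟩
  all_goals
    rintro _ ⟨_, ⟨s, hs, rfl⟩, rfl⟩
    exact ⟨_, hx ⟨s, hs, rfl⟩, by push_cast; rfl⟩

lemma card_image_intCast (hF : F ⊆ Finset.Ico l (l + m)) (hm : m ≤ P) :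
    #(F.image (Int.cast : ℤ → ZMod P)) = #F := by
  refine Finset.card_image_of_injOn fun x hx y hy hxy => ?_
  have hx := Finset.mem_Ico.mp (hF hx)
  have hy := Finset.mem_Ico.mp (hF hy)
  have hdvd := (ZMod.intCast_eq_intCast_iff_dvd_sub _ _ _).mp hxy
  have := Int.eq_zero_of_abs_lt_dvd hdvd (by rw [abs_lt]; omega)
  omega

-- The period `P` is so large that a set of diameter `δ` cannot meet two translates `F + P * i`.
lemma exists_sub_mem_of_intCast_mem_image {E : Set ℤ} {δ : ℤ} (hF : F ⊆ Finset.Ico l (l + m))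
    (hE : ∀ x ∈ E, ∀ y ∈ E, x - y ≤ δ) (hP : m + δ ≤ P)
    (hEF : ∀ x ∈ E, (x : ZMod P) ∈ F.image (Int.cast : ℤ → ZMod P)) :
    ∃ w : ℤ, ∀ x ∈ E, x - w ∈ F := by
  rcases E.eq_empty_or_nonempty with rfl | ⟨x₀, hx₀⟩
  · simp
  have hrep : ∀ x ∈ E, ∃ f ∈ F, (P : ℤ) ∣ x - f := fun x hx => by
    obtain ⟨f, hf, hfx⟩ := Finset.mem_image.mp (hEF x hx)
    exact ⟨f, hf, (ZMod.intCast_eq_intCast_iff_dvd_sub _ _ _).mp hfx⟩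
  obtain ⟨f₀, hf₀, hdvd₀⟩ := hrep x₀ hx₀
  refine ⟨x₀ - f₀, fun x hx => ?_⟩
  obtain ⟨f, hf, hdvd⟩ := hrep x hx
  have hzero : x - f - (x₀ - f₀) = 0 := by
    refine Int.eq_zero_of_abs_lt_dvd (hdvd.sub hdvd₀) ?_
    have hlf := Finset.mem_Ico.mp (hF hf)
    have hlf₀ := Finset.mem_Ico.mp (hF hf₀)
    have hδ := hE x hx x₀ hx₀
    have hδ' := hE x₀ hx₀ x hx
    rw [abs_lt]
    omega
  rwa [show x - (x₀ - f₀) = f by linarith]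

lemma TrFreeZ.preimage_intCast_image (hF : F ⊆ Finset.Ico l (l + m)) (hfree : TrFreeZ S F)
    (hS : S ⊆ Set.Icc a b) (hP : m + (b - a) ≤ P) :
    TrFreeZ S ((Int.cast : ℤ → ZMod P) ⁻¹' (F.image (Int.cast : ℤ → ZMod P))) := by
  refine fun x => ⟨fun h => ?_, fun h => ?_⟩
  · have hdiam : ∀ y ∈ (· + x) '' S, ∀ z ∈ (· + x) '' S, y - z ≤ b - a := by
      rintro _ ⟨s, hs, rfl⟩ _ ⟨t, ht, rfl⟩
      linarith [(hS hs).2, (hS ht).1]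
    obtain ⟨w, hw⟩ := exists_sub_mem_of_intCast_mem_image hF hdiam hP fun y hy => h hy
    refine (hfree (x - w)).1 (Set.image_subset_iff.mpr fun s hs => ?_)
    simpa [add_sub_assoc] using hw _ ⟨s, hs, rfl⟩
  · have hdiam : ∀ y ∈ (-· + x) '' S, ∀ z ∈ (-· + x) '' S, y - z ≤ b - a := by
      rintro _ ⟨s, hs, rfl⟩ _ ⟨t, ht, rfl⟩
      linarith [(hS hs).1, (hS ht).2]
    obtain ⟨w, hw⟩ := exists_sub_mem_of_intCast_mem_image hF hdiam hP fun y hy => h hy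
    refine (hfree (x - w)).2 (Set.image_subset_iff.mpr fun s hs => ?_)
    simpa [add_sub_assoc] using hw _ ⟨s, hs, rfl⟩

theorem TrFreeZ.card_le_densZ_mul [NeZero P] (hF : F ⊆ Finset.Ico l (l + m))
    (hfree : TrFreeZ S F) (hS : S ⊆ Set.Icc a b) (hP : m + (b - a) ≤ P) :
    (#F : ℝ) ≤ densZ S * P := by
  have hab : a ≤ b := Set.nonempty_Icc.mp (hfree.nonempty.mono hS)
  have hP' : (0 : ℝ) < P := by exact_mod_cast NeZero.pos P
  rw [← div_le_iff₀ hP', ← card_image_intCast hF (by linarith : m ≤ P)]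
  exact (card_div_le_upperDensity_preimage_intCast _).trans
    (hfree.preimage_intCast_image hF hS hP).upperDensity_le_densZ

lemma densZ_pos (hne : S.Nontrivial) (hS : S ⊆ Set.Icc a b) : 0 < densZ S := by
  have hab : a ≤ b := Set.nonempty_Icc.mp (hne.nonempty.mono hS)
  obtain ⟨P, hP⟩ := Int.eq_ofNat_of_zero_le (by omega : 0 ≤ 1 + (b - a))
  have : NeZero P := ⟨by omega⟩
  have hcard : (1 : ℝ) ≤ densZ S * P := by
    simpa using TrFreeZ.card_le_densZ_mul (F := {0}) (l := 0) (m := 1) (by simp)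
      (by simpa using trFreeZ_singleton hne 0) hS hP.le
  exact pos_of_mul_pos_left (zero_lt_one.trans_le hcard) P.cast_nonneg

theorem copyFreeNum_Ico_le_densZ_mul [NeZero P] {m : ℕ} (hne : S.Nonempty) (hS : S ⊆ Set.Icc a b)
    (hP : m + (b - a) ≤ P) :
    (copyFreeNum ((fun z : ℤ => (z : ℝ)) '' S)
      ((Finset.Ico 0 (m : ℤ)).image fun z : ℤ => (z : ℝ)) : ℝ) ≤ densZ S * P := by
  have hnonneg : 0 ≤ densZ S * P := by
    simpa using TrFreeZ.card_le_densZ_mul (F := ∅) (l := 0) (m := m) (by simp)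
      (by simpa using trFreeZ_empty hne) hS hP
  rw [← Nat.le_floor_iff hnonneg]
  refine copyFreeNum_le fun B hB hfree => ?_
  obtain ⟨F, hF, rfl⟩ := Finset.subset_image_iff.mp hB
  rw [Finset.coe_image] at hfree
  rw [Nat.le_floor_iff hnonneg, Finset.card_image_of_injective _ Int.cast_injective]
  exact (trFreeZ_of_not_hasCopy hfree).card_le_densZ_mul (l := 0) (by simpa using hF) hS hP

theorem exists_trFreeZ_preimage_intCast {c : ℝ} (hc : c < densZ S) (hne : S.Nonempty)
    (hS : S ⊆ Set.Icc a b) :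
    ∃ (P : ℕ) (_ : NeZero P) (T : Finset (ZMod P)),
      TrFreeZ S ((Int.cast : ℤ → ZMod P) ⁻¹' T) ∧ c * P < #T := by
  classical
  have hab : a ≤ b := Set.nonempty_Icc.mp (hne.mono hS)
  obtain ⟨d, hcd, hd⟩ := exists_between hc
  obtain ⟨_, ⟨A, hA, rfl⟩, hdA⟩ := exists_lt_of_lt_csSup 
    (Set.Nonempty.image _ ⟨∅, trFreeZ_empty hne⟩) hd
  have hfreq := frequently_lt_of_lt_limsup (isCoboundedUnder_ncard_inter_Icc_div A) hdA
  obtain ⟨K, hK⟩ := exists_nat_gt (c * (b - a) / (d - c))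
  obtain ⟨N, hKN, hN⟩ := frequently_atTop.mp hfreq K
  set F := (Finset.Ico (-(N : ℤ)) (-N + (2 * N + 1))).filter (· ∈ A)
  have hAF : A ∩ Set.Icc (-(N : ℤ)) N = F := by
    ext x
    simp only [F, Set.mem_inter_iff, Set.mem_Icc, Finset.coe_filter, Finset.mem_Ico,
      Set.mem_ofPred_eq]
    grind
  obtain ⟨P, hP⟩ := Int.eq_ofNat_of_zero_le (by omega : 0 ≤ (2 * N + 1) + (b - a))
  have hPN : (P : ℝ) = 2 * N + 1 + (b - a) := by exact_mod_cast hP.symm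
  have hF := Finset.filter_subset (· ∈ A) (Finset.Ico (-(N : ℤ)) (-N + (2 * N + 1)))
  refine ⟨P, ⟨by omega⟩, F.image Int.cast, ?_, ?_⟩
  · exact (hA.mono (hAF ▸ Set.inter_subset_left)).preimage_intCast_image hF hS hP.le
  · rw [hAF, Set.ncard_coe_finset, lt_div_iff₀ (by positivity)] at hN
    rw [div_lt_iff₀ (by linarith)] at hK
    rw [card_image_intCast hF (by omega), hPN]
    have hKN : (K : ℝ) ≤ N := by exact_mod_cast hKN
    have hgap : c * (b - a) < (2 * N + 1) * (d - c) :=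
      hK.trans_le (mul_le_mul_of_nonneg_right (by linarith) (by linarith))
    linarith

end Periodization

section Coloring

lemma exists_coord_eq_add_or_eq_sub {ι : Type*} [Fintype ι] {S : Set ℝ} {a b : ℝ}
    (ha : IsLeast S a) (hb : IsGreatest S b) (hab : a < b) {f : ℝ → ι → ℝ}
    (hf : ∀ s ∈ S, ∀ t ∈ S, dist (f s) (f t) = dist s t) :
    ∃ i, (∀ s ∈ S, f s i = f a i + (s - a)) ∨ ∀ s ∈ S, f s i = f a i - (s - a) := by
  have hle : ∀ s ∈ S, ∀ t ∈ S, ∀ i, s ≤ t → |f t i - f s i| ≤ t - s := fun s hs t ht i hst => by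
    rw [← Real.dist_eq, ← abs_of_nonneg (sub_nonneg.mpr hst), ← Real.dist_eq, ← hf t ht s hs]
    exact dist_le_pi_dist _ _ i
  obtain ⟨i, hi⟩ : ∃ i, b - a ≤ |f b i - f a i| := by
    by_contra! hlt
    have hdist : dist (f b) (f a) < b - a := (dist_pi_lt_iff (sub_pos.mpr hab)).mpr hlt
    rw [hf b hb.1 a ha.1, Real.dist_eq, abs_of_pos (sub_pos.mpr hab)] at hdist
    exact hdist.false
  refine ⟨i, (le_abs.mp hi).imp (fun h s hs => ?_) fun h s hs => ?_⟩
  all_goals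
    have has := abs_le.mp (hle a ha.1 s hs i (ha.2 hs))
    have hsb := abs_le.mp (hle s hs b hb.1 i (hb.2 hs))
    linarith

variable {S : Set ℤ} {a b : ℤ} {P : ℕ} {T : Finset (ZMod P)}

theorem isProperColoring_of_floor_sub_mem {ι κ : Type*} [Fintype ι] (ha : IsLeast S a)
    (hb : IsGreatest S b) (hab : a < b) (hT : TrFreeZ S ((Int.cast : ℤ → ZMod P) ⁻¹' T))
    {c : (ι → ℝ) → κ} {J : κ → ι → ZMod P} (hJ : ∀ x i, (⌊x i⌋ : ZMod P) - J (c x) i ∈ T) :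
    IsProperColoring ((fun z : ℤ => (z : ℝ)) '' S) c := by
  rintro j ⟨f, hf, hfj⟩
  obtain ⟨i, hi⟩ := exists_coord_eq_add_or_eq_sub (Int.cast_mono.map_isLeast ha)
    (Int.cast_mono.map_isGreatest hb) (Int.cast_lt.mpr hab) hf
  obtain ⟨w, hw⟩ := ZMod.intCast_surjective (J j i)
  have hmem : ∀ s ∈ S, ((⌊f s i⌋ - w : ℤ) : ZMod P) ∈ T := fun s hs => by
    have hcolor : c (f s) = j := hfj ⟨_, ⟨s, hs, rfl⟩, rfl⟩
    rw [Int.cast_sub, hw, ← hcolor]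
    exact hJ (f s) i
  rcases hi with hi | hi
  · refine (hT (⌊f a i⌋ - a - w)).1 (Set.image_subset_iff.mpr fun s hs => ?_)
    have hfloor : ⌊f s i⌋ = ⌊f a i⌋ + (s - a) := by
      rw [hi s ⟨s, hs, rfl⟩, ← Int.cast_sub, Int.floor_add_intCast]
    rw [Set.mem_preimage, show s + (⌊f a i⌋ - a - w) = ⌊f s i⌋ - w by linarith]
    exact hmem s hs
  · refine (hT (⌊f a i⌋ + a - w)).2 (Set.image_subset_iff.mpr fun s hs => ?_)
    have hfloor : ⌊f s i⌋ = ⌊f a i⌋ - (s - a) := by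
      rw [hi s ⟨s, hs, rfl⟩, ← Int.cast_sub, Int.floor_sub_intCast]
    rw [Set.mem_preimage, show -s + (⌊f a i⌋ + a - w) = ⌊f s i⌋ - w by linarith]
    exact hmem s hs

theorem exists_isProperColoring_fin_le [NeZero P] (ha : IsLeast S a) (hb : IsGreatest S b)
    (hab : a < b) (hT : TrFreeZ S ((Int.cast : ℤ → ZMod P) ⁻¹' T)) (hne : T.Nonempty) (n : ℕ) :
    ∃ (r : ℕ) (c : (Fin n → ℝ) → Fin r), IsProperColoring ((fun z : ℤ => (z : ℝ)) '' S) c ∧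
      (r : ℝ) ≤ (P / #T : ℝ) ^ n * (n * Real.log P) + 1 := by
  obtain ⟨X, hX, hcard⟩ := exists_card_le_add_eq_univ
    (Fintype.piFinset_nonempty.mpr fun _ : Fin n => hne)
  have hcover : ∀ x : Fin n → ℝ, ∃ g : X, ∀ i, (⌊x i⌋ : ZMod P) - g.1 i ∈ T := fun x => by
    obtain ⟨g, hg, t, ht, hgt⟩ := Finset.mem_add.mp
      (hX ▸ Finset.mem_univ fun i => (⌊x i⌋ : ZMod P))
    refine ⟨⟨g, hg⟩, fun i => ?_⟩
    rw [← congrFun hgt i, Pi.add_apply, add_sub_cancel_left]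
    exact Fintype.mem_piFinset.mp ht i
  choose c hc using hcover
  obtain ⟨c', hc'⟩ :=
    (isProperColoring_of_floor_sub_mem ha hb hab hT (J := Subtype.val) hc).exists_fin
  refine ⟨_, c', hc', ?_⟩
  simpa [ZMod.card, Fintype.card_piFinset, div_pow] using hcard

end Coloring

section Asymptotics

lemma eventually_pow_mul_add_one_lt_pow {q b : ℝ} (hq : 0 ≤ q) (hqb : q < b) (hb : 1 < b)
    (L : ℝ) : ∀ᶠ n : ℕ in atTop, q ^ n * (n * L) + 1 < b ^ n := by
  have hb0 : 0 < b := zero_lt_one.trans hb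
  have hmain : Tendsto (fun n : ℕ => n * (q / b) ^ n * L) atTop (𝓝 (0 * L)) :=
    (tendsto_self_mul_const_pow_of_lt_one (by positivity) ((div_lt_one hb0).mpr hqb)).mul_const L
  have hone : Tendsto (fun n : ℕ => b⁻¹ ^ n) atTop (𝓝 0) :=
    tendsto_pow_atTop_nhds_zero_of_lt_one (by positivity) (inv_lt_one_of_one_lt₀ hb)
  filter_upwards [(hmain.add hone).eventually_lt_const (by simp : 0 * L + 0 < 1)] with n hn
  rw [← div_lt_one (by positivity)]
  convert hn using 1
  rw [div_pow, inv_pow]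
  field_simp

variable {S : Set ℤ} {a b : ℤ}

theorem inv_densZ_le_rpow (hnt : S.Nontrivial) (hS : S ⊆ Set.Icc a b) {n N : ℕ} (hn : n ≠ 0)
    {c : (Fin n → ℝ) → Fin N} (hc : IsProperColoring ((fun z : ℤ => (z : ℝ)) '' S) c) :
    (densZ S)⁻¹ ≤ (N : ℝ) ^ (1 / n : ℝ) := by
  have hab : a ≤ b := Set.nonempty_Icc.mp (hnt.nonempty.mono hS)
  obtain ⟨δ, hδ⟩ := Int.eq_ofNat_of_zero_le (sub_nonneg.mpr hab)
  have hbound : ∀ m : ℕ, m ≠ 0 → (m / (m + δ) : ℝ) ≤ (N : ℝ) ^ (1 / n : ℝ) * densZ S := by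
    intro m hm
    have : NeZero (m + δ) := ⟨by omega⟩
    set I := (Finset.Ico 0 (m : ℤ)).image fun z : ℤ => (z : ℝ)
    set L := copyFreeNum ((fun z : ℤ => (z : ℝ)) '' S) I
    have hI : #I = m := by simp [I, Finset.card_image_of_injective _ Int.cast_injective]
    have hL : (L : ℝ) ≤ densZ S * (m + δ : ℕ) :=
      copyFreeNum_Ico_le_densZ_mul hnt.nonempty hS (by push_cast; linarith)
    have hcount : m ^ n ≤ L ^ n * N := by
      simpa [hI] using (hc.card_le (Fintype.piFinset fun _ => I)).trans
        (Nat.mul_le_mul_right _ (copyFreeNum_piFinset_le _ I n))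
    have hroot : (m : ℝ) ≤ L * (N : ℝ) ^ (1 / n : ℝ) := by
      refine le_of_pow_le_pow_left₀ hn (by positivity) ?_
      rw [mul_pow, one_div, Real.rpow_inv_natCast_pow N.cast_nonneg hn]
      exact_mod_cast hcount
    rw [div_le_iff₀ (by positivity)]
    calc (m : ℝ) ≤ L * (N : ℝ) ^ (1 / n : ℝ) := hroot
      _ ≤ densZ S * (m + δ : ℕ) * (N : ℝ) ^ (1 / n : ℝ) := by gcongr
      _ = (N : ℝ) ^ (1 / n : ℝ) * densZ S * (m + δ) := by push_cast; ring
  rw [inv_le_iff_one_le_mul₀ (densZ_pos hnt hS)]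
  refine le_of_tendsto (tendsto_natCast_div_add_atTop (δ : ℝ)) ?_
  filter_upwards [eventually_ne_atTop 0] with m hm using hbound m hm

theorem eventually_chrom_rpow_lt (ha : IsLeast S a) (hb : IsGreatest S b) (hab : a < b) {v : ℝ}
    (hv0 : 0 < v) (hv : v⁻¹ < densZ S) :
    ∀ᶠ n : ℕ in atTop, (chrom ((fun z : ℤ => (z : ℝ)) '' S) n : ℝ) ^ (1 / n : ℝ) < v := by
  obtain ⟨P, _, T, hT, hcard⟩ :=
    exists_trFreeZ_preimage_intCast hv ⟨a, ha.1⟩ fun s hs => ⟨ha.2 hs, hb.2 hs⟩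
  have hTpos : (0 : ℝ) < #T := lt_of_le_of_lt (by positivity) hcard
  have hTne : T.Nonempty := Finset.card_pos.mp (by exact_mod_cast hTpos)
  have hTP : (#T : ℝ) ≤ P := by exact_mod_cast (T.card_le_univ.trans_eq (ZMod.card P))
  have hq : 1 ≤ (P / #T : ℝ) := (one_le_div hTpos).mpr hTP
  have hqv : (P / #T : ℝ) < v := by
    rwa [div_lt_iff₀ hTpos, ← inv_mul_lt_iff₀ hv0]
  filter_upwards [eventually_ne_atTop 0, eventually_pow_mul_add_one_lt_pow
    (zero_le_one.trans hq) hqv (hq.trans_lt hqv) (Real.log P)] with n hn hlt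
  obtain ⟨r, c, hc, hr⟩ := exists_isProperColoring_fin_le ha hb hab hT hTne n
  have hchrom : (chrom ((fun z : ℤ => (z : ℝ)) '' S) n : ℝ) < v ^ n :=
    (Nat.cast_le.mpr hc.chrom_le).trans_lt (hr.trans_lt hlt)
  calc (chrom ((fun z : ℤ => (z : ℝ)) '' S) n : ℝ) ^ (1 / n : ℝ)
      < (v ^ n) ^ (1 / n : ℝ) := Real.rpow_lt_rpow (by positivity) hchrom (by positivity)
    _ = v := by rw [one_div, Real.pow_rpow_inv_natCast hv0.le hn]

theorem chi_int_baton_general (hS : S.Finite) (hnt : S.Nontrivial) :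
    Tendsto (fun n : ℕ => (chrom ((fun z : ℤ => (z : ℝ)) '' S) n : ℝ) ^ (1 / (n : ℝ)))
      atTop (𝓝 (densZ S)⁻¹) := by
  obtain ⟨a, ha⟩ := hS.isCompact.exists_isLeast hnt.nonempty
  obtain ⟨b, hb⟩ := hS.isCompact.exists_isGreatest hnt.nonempty
  obtain ⟨x, hx, y, hy, hxy⟩ := hnt.exists_lt
  have hab : a < b := (ha.2 hx).trans_lt (hxy.trans_le (hb.2 hy))
  have hSab : S ⊆ Set.Icc a b := fun s hs => ⟨ha.2 hs, hb.2 hs⟩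
  have hd := densZ_pos hnt hSab
  refine tendsto_order.mpr ⟨fun u hu => ?_, fun v hv => ?_⟩
  · obtain ⟨P, _, T, hT, hcard⟩ := exists_trFreeZ_preimage_intCast hd hnt.nonempty hSab
    have hTne : T.Nonempty := Finset.card_pos.mp (by simpa using hcard)
    filter_upwards [eventually_ne_atTop 0] with n hn
    obtain ⟨r, c, hc, -⟩ := exists_isProperColoring_fin_le ha hb hab hT hTne n
    obtain ⟨c', hc'⟩ := hc.exists_fin_chrom
    exact hu.trans_le (inv_densZ_le_rpow hnt hSab hn hc')
  · have hv0 : 0 < v := (inv_pos.mpr hd).trans hv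
    exact eventually_chrom_rpow_lt ha hb hab hv0 (inv_lt_of_inv_lt₀ hd hv)

end Asymptotics

lemma batonZ_finite (lam : ℕ → ℤ) (k : ℕ) : (batonZ lam k).Finite :=
  (Set.finite_Iic k).image _

lemma batonZ_nontrivial {lam : ℕ → ℤ} {k : ℕ} (hk : 0 < k) (hlam : ∀ j < k, 0 < lam j) :
    (batonZ lam k).Nontrivial := by
  have hpos : 0 < ∑ j ∈ Finset.range k, lam j :=
    Finset.sum_pos (fun j hj => hlam j (Finset.mem_range.mp hj))
      (Finset.nonempty_range_iff.mpr hk.ne')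
  exact ⟨0, ⟨0, Nat.zero_le k, by simp⟩, _, ⟨k, Set.self_mem_Iic, rfl⟩, hpos.ne⟩

/-- For an integer baton `B`, `χ(ℝ^n_∞, B) = (d(ℤ,B)⁻¹ + o(1))^n`, i.e.
`χ(ℝ^n_∞, B)^(1/n) → d(ℤ,B)⁻¹` as `n → ∞`. -/
theorem chi_int_baton (k : ℕ) (hk : 0 < k) (lam : ℕ → ℤ) (hlam : ∀ j < k, 0 < lam j) :
    Tendsto
      (fun n : ℕ => (chrom ((fun z : ℤ => (z : ℝ)) '' batonZ lam k) n : ℝ) ^ (1 / (n : ℝ)))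
      atTop (nhds (densZ (batonZ lam k))⁻¹) :=
  chi_int_baton_general (batonZ_finite lam k) (batonZ_nontrivial hk hlam)
end

section
/- Let k ≥ 2 and m ≥ 1 be integers. Then for every ε > 0 there exists N such that for all n ≥ N: (1−ε)·((m−1)!·k^{m−1}/n^{m−1})·((k+1)/k)^n ≤ χ(ℝ^n_∞, B_k^m) ≤ (1+ε)·(ln k)·n·((k+1)/k)^n. In particular, lim_{n→∞} χ(ℝ^n_∞, B_k^m)^{1/n} = (k+1)/k. -/
open Set Filter

/-- `B_k^m = {0,1,…,k}^m ⊆ ℝ^m`, the `m`-fold Cartesian power of the baton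
`B_k = {0,1,…,k}`, with the max metric. -/
def box (m k : ℕ) : Set (Fin m → ℝ) :=
  {x | ∀ i, ∃ j : ℕ, j ≤ k ∧ x i = (j : ℝ)}

/-!
Lower bound: a subset of `{0, …, k}^n` without a copy of `{0, …, k}^m` has at most
`∑ j < m, n.choose j * k ^ (n - j)` points. Fibre the set over its last `n - 1` coordinates. A
fibre `F ⊆ {0, …, k}` other than `{0, …, k}` has at most as many points as there are `t < k` such
that `F` meets `{t, t + 1}`. The base points whose fibre meets `{t, t + 1}` form a set that embeds
isometrically into the original one, because distinct integer points are at distance at least `1`;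
the base points with full fibre form a set without a copy of `{0, …, k}^(m - 1)`. Induction then
gives the Pascal-type recurrence of the bound, and every colour class of `{0, …, k}^n` obeys it.

Upper bound: along some coordinate, a copy of `{0, …, k}` in `ℝ^n` is an arithmetic progression of
difference `1`, so the integer parts of this coordinate run through all residues modulo `k + 1`.
Hence, for each residue vector `t`, the set of points whose residues all differ from those of `t`
contains no copy. A greedy choice covers the space by few such sets.
-/

open Asymptotics
open scoped Finset Nat Topology

/-! ### Isometric copies and colourings -/

section Copies

variable {α β γ ι κ : Type*} [MetricSpace α] [MetricSpace β] [MetricSpace γ]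
  {M : Set α} {A B : Set β}

lemma HasCopy.map {e : β → γ} {C : Set γ} (h : HasCopy M A) (he : Isometry e)
    (hAC : MapsTo e A C) : HasCopy M C := by
  obtain ⟨f, hf, hfA⟩ := h
  refine ⟨e ∘ f, fun x hx y hy ↦ (he.dist_eq _ _).trans (hf x hx y hy), ?_⟩
  rintro _ ⟨x, hx, rfl⟩
  exact hAC (hfA (mem_image_of_mem f hx))

lemma HasCopy.mono_s2 (h : HasCopy M A) (hAB : A ⊆ B) : HasCopy M B :=
  h.map isometry_id hAB

lemma HasCopy.trans {C : Set γ} (hMA : HasCopy M A) (hAC : HasCopy A C) : HasCopy M C := by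
  obtain ⟨f, hf, hfA⟩ := hMA
  obtain ⟨g, hg, hgC⟩ := hAC
  have hfM : MapsTo f M A := mapsTo_iff_image_subset.2 hfA
  refine ⟨g ∘ f, fun x hx y hy ↦ (hg _ (hfM hx) _ (hfM hy)).trans (hf x hx y hy), ?_⟩
  rintro _ ⟨x, hx, rfl⟩
  exact hgC (mem_image_of_mem g (hfM hx))

lemma hasCopy_of_subsingleton [Subsingleton α] (hA : A.Nonempty) : HasCopy M A := by
  obtain ⟨a, ha⟩ := hA
  refine ⟨fun _ ↦ a, fun x _ y _ ↦ by rw [Subsingleton.elim x y, dist_self, dist_self], ?_⟩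
  rintro _ ⟨_, _, rfl⟩
  exact ha

lemma card_eq_zero_of_not_hasCopy [Subsingleton α] {V : Finset β}
    (h : ¬ HasCopy M (V : Set β)) : #V = 0 := by
  contrapose! h
  exact hasCopy_of_subsingleton (Finset.card_ne_zero.1 h)

/-- A colouring `c` is `M`-free if no colour class contains an isometric copy of `M`; this is the
condition on colourings in the definition of `chrom M n`. -/
def IsCopyFree (M : Set α) (c : β → ι) : Prop :=
  ∀ i, ¬ HasCopy M {x | c x = i}

lemma IsCopyFree.comp_isometry {c : γ → ι} (hc : IsCopyFree M c) {e : β → γ} (he : Isometry e) :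
    IsCopyFree M (c ∘ e) :=
  fun i h ↦ hc i (h.map he fun _ hx ↦ hx)

lemma IsCopyFree.equiv_comp {c : β → ι} (hc : IsCopyFree M c) (e : ι ≃ κ) :
    IsCopyFree M (e ∘ c) := by
  intro i h
  exact hc (e.symm i) (h.mono_s2 fun _ hx ↦ (e.eq_symm_apply).2 hx)

lemma IsCopyFree.card_le_mul [Fintype ι] {c : β → ι} (hc : IsCopyFree M c)
    {P : Finset β} {s : ℕ} (hP : ∀ V ⊆ P, ¬ HasCopy M (V : Set β) → #V ≤ s) :
    #P ≤ s * Fintype.card ι := by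
  classical
  refine Finset.card_le_mul_card_image_of_maps_to (f := c) (fun _ _ ↦ Finset.mem_univ _) s
    fun i _ ↦ hP _ (Finset.filter_subset _ _) fun h ↦ hc i (h.mono_s2 fun _ hx ↦ ?_)
  exact (Finset.mem_filter.1 hx).2

variable {n : ℕ} {c : (Fin n → ℝ) → ι}

lemma chrom_le_card [Fintype ι] (hc : IsCopyFree M c) : chrom M n ≤ Fintype.card ι :=
  Nat.sInf_le ⟨_, hc.equiv_comp (Fintype.equivFin ι)⟩

lemma exists_isCopyFree_chrom [Finite ι] (hc : IsCopyFree M c) :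
    ∃ c' : (Fin n → ℝ) → Fin (chrom M n), IsCopyFree M c' :=
  Nat.sInf_mem (s := {N | ∃ c : (Fin n → ℝ) → Fin N, IsCopyFree M c})
    ⟨_, _, hc.equiv_comp (Finite.equivFin ι)⟩

end Copies

lemma isometry_natCast_comp (ι : Type*) [Fintype ι] :
    Isometry fun (x : ι → ℕ) i ↦ (x i : ℝ) :=
  Isometry.piMap (fun _ ↦ Nat.cast) fun _ ↦ Isometry.of_dist_eq Nat.dist_cast_real

lemma hasCopy_box_Iic (m k : ℕ) : HasCopy (box m k) (Iic fun _ : Fin m ↦ k) := by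
  have cast_floor : ∀ x ∈ box m k, (fun i ↦ ((⌊x i⌋₊ : ℕ) : ℝ)) = x := by
    intro x hx
    ext i
    obtain ⟨j, -, hj⟩ := hx i
    rw [hj, Nat.floor_natCast]
  refine ⟨fun x i ↦ ⌊x i⌋₊, fun x hx y hy ↦ ?_, ?_⟩
  · rw [← (isometry_natCast_comp (Fin m)).dist_eq, cast_floor x hx, cast_floor y hy]
  · rintro _ ⟨x, hx, rfl⟩ i
    obtain ⟨j, hjk, hj⟩ := hx i
    simpa only [hj, Nat.floor_natCast] using hjk

lemma hasCopy_Iic_box (m k : ℕ) : HasCopy (Iic k) (box (m + 1) k) := by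
  refine ⟨fun j _ ↦ (j : ℝ), fun a _ b _ ↦ ?_, ?_⟩
  · rw [dist_pi_const, Nat.dist_cast_real]
  · rintro _ ⟨j, hj, rfl⟩ _
    exact ⟨j, hj, rfl⟩

/-! ### Copies of a grid in a subset of a larger grid -/

section Grid

variable {n : ℕ}

lemma dist_fin_cons (a b : ℕ) (x y : Fin n → ℕ) :
    dist (Fin.cons a x : Fin (n + 1) → ℕ) (Fin.cons b y) = max (dist a b) (dist x y) := by
  simpa only [Fin.insertNth_zero'] using
    Fin.dist_insertNth_insertNth (α := fun _ ↦ ℕ) 0 a b x y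

lemma one_le_dist_of_ne {ι : Type*} [Fintype ι] {x y : ι → ℕ} (h : x ≠ y) : 1 ≤ dist x y := by
  obtain ⟨i, hi⟩ := Function.ne_iff.1 h
  exact (Nat.pairwise_one_le_dist hi).trans (dist_le_pi_dist x y i)

lemma isometry_fin_cons_of_dist_le_one {h : (Fin n → ℕ) → ℕ} (hh : ∀ x y, dist (h x) (h y) ≤ 1) :
    Isometry fun x ↦ (Fin.cons (h x) x : Fin (n + 1) → ℕ) := by
  refine Isometry.of_dist_eq fun x y ↦ ?_
  rw [dist_fin_cons]
  obtain rfl | hxy := eq_or_ne x y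
  · simp only [dist_self, max_self]
  · exact max_eq_right ((hh x y).trans (one_le_dist_of_ne hxy))

lemma HasCopy.of_adjacent_layers {α : Type*} [MetricSpace α] {M : Set α}
    {A : Set (Fin (n + 1) → ℕ)} {t : ℕ}
    (h : HasCopy M {y | Fin.cons t y ∈ A ∨ Fin.cons (t + 1) y ∈ A}) : HasCopy M A := by
  classical
  let height (y : Fin n → ℕ) : ℕ := if Fin.cons t y ∈ A then t else t + 1
  refine h.map (isometry_fin_cons_of_dist_le_one (h := height) fun x y ↦ ?_) fun y hy ↦ ?_
  · simp only [height, Nat.dist_eq]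
    split_ifs <;> simp
  · by_cases hyt : Fin.cons t y ∈ A
    · simpa only [height, if_pos hyt] using hyt
    · simpa only [height, if_neg hyt] using hy.resolve_left hyt

lemma HasCopy.grid_succ {m k : ℕ} {A : Set (Fin (n + 1) → ℕ)}
    (h : HasCopy (Iic fun _ : Fin m ↦ k) {y | ∀ s ≤ k, Fin.cons s y ∈ A}) :
    HasCopy (Iic fun _ : Fin (m + 1) ↦ k) A := by
  obtain ⟨f, hf, hfA⟩ := h
  have tail_mem : ∀ x ∈ Iic (fun _ : Fin (m + 1) ↦ k), Fin.tail x ∈ Iic fun _ : Fin m ↦ k :=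
    fun x hx i ↦ hx i.succ
  refine ⟨fun x ↦ Fin.cons (x 0) (f (Fin.tail x)), fun x hx y hy ↦ ?_, ?_⟩
  · rw [dist_fin_cons, hf _ (tail_mem x hx) _ (tail_mem y hy), ← dist_fin_cons,
      Fin.cons_self_tail, Fin.cons_self_tail]
  · rintro _ ⟨x, hx, rfl⟩
    exact hfA (mem_image_of_mem f (tail_mem x hx)) (x 0) (hx 0)

/-- The fibre of `V` over `y`: the first coordinates of the points of `V` whose remaining
coordinates form `y`. -/
def fiber (V : Finset (Fin (n + 1) → ℕ)) (y : Fin n → ℕ) : Finset ℕ :=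
  {x ∈ V | Fin.tail x = y}.image fun x ↦ x 0

lemma mem_fiber {V : Finset (Fin (n + 1) → ℕ)} {y : Fin n → ℕ} {s : ℕ} :
    s ∈ fiber V y ↔ Fin.cons s y ∈ V := by
  simp only [fiber, Finset.mem_image, Finset.mem_filter]
  constructor
  · rintro ⟨x, ⟨hx, rfl⟩, rfl⟩
    rwa [Fin.cons_self_tail]
  · exact fun h ↦ ⟨_, ⟨h, Fin.tail_cons _ _⟩, Fin.cons_zero _ _⟩

lemma card_eq_sum_card_fiber (V : Finset (Fin (n + 1) → ℕ)) :
    #V = ∑ y ∈ V.image Fin.tail, #(fiber V y) := by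
  rw [Finset.card_eq_sum_card_image Fin.tail V]
  refine Finset.sum_congr rfl fun y _ ↦ (Finset.card_image_of_injOn ?_).symm
  intro x hx x' hx' (h0 : x 0 = x' 0)
  have htail : Fin.tail x = Fin.tail x' :=
    (Finset.mem_filter.1 hx).2.trans (Finset.mem_filter.1 hx').2.symm
  rw [← Fin.cons_self_tail x, ← Fin.cons_self_tail x', htail, h0]

lemma card_le_card_adjacent_add_ite {k : ℕ} {F : Finset ℕ} (hF : F ⊆ Finset.Iic k) :
    #F ≤ #{t ∈ Finset.range k | t ∈ F ∨ t + 1 ∈ F} + if Finset.Iic k ⊆ F then 1 else 0 := by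
  by_cases hfull : Finset.Iic k ⊆ F
  · have hrange : {t ∈ Finset.range k | t ∈ F ∨ t + 1 ∈ F} = Finset.range k :=
      Finset.filter_true_of_mem fun t ht ↦
        Or.inl (hfull (Finset.mem_Iic.2 (Finset.mem_range.1 ht).le))
    rw [if_pos hfull, hrange, Finset.card_range, ← Nat.card_Iic]
    exact Finset.card_le_card hF
  · obtain ⟨g, hgk, hgF⟩ := Finset.not_subset.1 hfull
    rw [if_neg hfull, add_zero]
    have ne_gap : ∀ s ∈ F, s ≠ g := fun s hs h ↦ hgF (h ▸ hs)
    -- Close the gap at `g` by lowering every element above it.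
    refine Finset.card_le_card_of_injOn (fun s ↦ if s < g then s else s - 1) ?_ ?_
    · intro s hs
      have hsk := Finset.mem_Iic.1 (hF hs)
      have hsg := ne_gap s hs
      simp only [Finset.mem_Iic] at hgk
      simp only [Finset.coe_filter, Finset.mem_range, mem_ofPred_eq]
      split_ifs with hlt
      · exact ⟨by lia, Or.inl hs⟩
      · exact ⟨by lia, Or.inr (by rwa [Nat.sub_add_cancel (by lia)])⟩
    · intro s hs s' hs' h
      have hsg := ne_gap s hs
      have hsg' := ne_gap s' hs'
      simp only at h
      split_ifs at h <;> lia

lemma card_le_sum_adjacent_layers_add_full {k : ℕ} {V : Finset (Fin (n + 1) → ℕ)}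
    (hV : (V : Set (Fin (n + 1) → ℕ)) ⊆ Iic fun _ ↦ k) :
    #V ≤ ∑ t ∈ Finset.range k, #{y ∈ V.image Fin.tail | t ∈ fiber V y ∨ t + 1 ∈ fiber V y} +
      #{y ∈ V.image Fin.tail | Finset.Iic k ⊆ fiber V y} := by
  have hfiber (y : Fin n → ℕ) : fiber V y ⊆ Finset.Iic k := fun s hs ↦
    Finset.mem_Iic.2 (hV (mem_fiber.1 hs) 0)
  calc #V = ∑ y ∈ V.image Fin.tail, #(fiber V y) := card_eq_sum_card_fiber V
    _ ≤ ∑ y ∈ V.image Fin.tail,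
          (#{t ∈ Finset.range k | t ∈ fiber V y ∨ t + 1 ∈ fiber V y} +
            if Finset.Iic k ⊆ fiber V y then 1 else 0) :=
        Finset.sum_le_sum fun y _ ↦ card_le_card_adjacent_add_ite (hfiber y)
    _ = _ := by
        rw [Finset.sum_add_distrib, ← Finset.card_filter]
        congr 1
        exact Finset.sum_card_bipartiteAbove_eq_sum_card_bipartiteBelow
          fun y t ↦ t ∈ fiber V y ∨ t + 1 ∈ fiber V y

/-- Upper bound for the number of points in a subset of `{0, …, k}^n` without an isometric copy
of `{0, …, k}^m`, in the style of the Sauer–Shelah lemma (the case `k = 1`). The terms with `j > n`,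
where the subtraction is truncated, vanish. -/
def sauerBound (k m n : ℕ) : ℕ :=
  ∑ j ∈ Finset.range m, n.choose j * k ^ (n - j)

lemma sauerBound_succ_succ (k m n : ℕ) :
    sauerBound k (m + 1) (n + 1) = k * sauerBound k (m + 1) n + sauerBound k m n := by
  have hterm (j : ℕ) : k * (n.choose (j + 1) * k ^ (n - (j + 1))) =
      n.choose (j + 1) * k ^ (n - j) := by
    obtain hjn | hnj := lt_or_ge j n
    · rw [mul_left_comm, ← pow_succ', Nat.sub_add_eq, Nat.sub_add_cancel (by lia)]
    · simp only [Nat.choose_eq_zero_of_lt (Nat.lt_succ_of_le hnj), zero_mul, mul_zero]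
  simp only [sauerBound, Finset.sum_range_succ' _ m, mul_add, Finset.mul_sum, hterm,
    Nat.choose_succ_succ, Nat.add_sub_add_right, add_mul, Finset.sum_add_distrib,
    Nat.choose_zero_right, tsub_zero, pow_succ]
  ring

theorem card_le_sauerBound {m k : ℕ} {V : Finset (Fin n → ℕ)}
    (hV : (V : Set (Fin n → ℕ)) ⊆ Iic fun _ ↦ k)
    (hcopy : ¬ HasCopy (Iic fun _ : Fin m ↦ k) (V : Set (Fin n → ℕ))) :
    #V ≤ sauerBound k m n := by
  induction n generalizing m with
  | zero =>
    cases m with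
    | zero => exact (card_eq_zero_of_not_hasCopy hcopy).trans_le (Nat.zero_le _)
    | succ m =>
      have hbound : sauerBound k (m + 1) 0 = 1 := by
        simp [sauerBound, Finset.sum_range_succ']
      exact (Finset.card_le_one_of_subsingleton V).trans_eq hbound.symm
  | succ n ih =>
    cases m with
    | zero => exact (card_eq_zero_of_not_hasCopy hcopy).trans_le (Nat.zero_le _)
    | succ m =>
      have htail : ∀ y ∈ V.image Fin.tail, y ∈ Iic fun _ : Fin n ↦ k := by
        intro y hy i
        obtain ⟨x, hx, rfl⟩ := Finset.mem_image.1 hy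
        exact hV hx i.succ
      have hlayers (t : ℕ) :
          #{y ∈ V.image Fin.tail | t ∈ fiber V y ∨ t + 1 ∈ fiber V y} ≤
            sauerBound k (m + 1) n := by
        refine ih (fun y hy ↦ htail y (Finset.mem_filter.1 hy).1) fun h ↦ hcopy ?_
        refine (h.mono_s2 fun y hy ↦ ?_).of_adjacent_layers (t := t)
        exact (Finset.mem_filter.1 hy).2.imp mem_fiber.1 mem_fiber.1
      have hfull : #{y ∈ V.image Fin.tail | Finset.Iic k ⊆ fiber V y} ≤ sauerBound k m n := by
        refine ih (fun y hy ↦ htail y (Finset.mem_filter.1 hy).1) fun h ↦ hcopy ?_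
        refine HasCopy.grid_succ (h.mono_s2 fun y hy s hs ↦ ?_)
        exact mem_fiber.1 ((Finset.mem_filter.1 hy).2 (Finset.mem_Iic.2 hs))
      calc #V ≤ _ := card_le_sum_adjacent_layers_add_full hV
        _ ≤ ∑ _t ∈ Finset.range k, sauerBound k (m + 1) n + sauerBound k m n :=
          add_le_add (Finset.sum_le_sum fun t _ ↦ hlayers t) hfull
        _ = sauerBound k (m + 1) (n + 1) := by
          rw [Finset.sum_const, Finset.card_range, smul_eq_mul, sauerBound_succ_succ]

lemma IsCopyFree.pow_le_sauerBound_mul {ι : Type*} [Fintype ι] {m k : ℕ}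
    {c : (Fin n → ℝ) → ι} (hc : IsCopyFree (box m k) c) :
    (k + 1) ^ n ≤ sauerBound k m n * Fintype.card ι := by
  have hgrid : #(Finset.Iic fun _ : Fin n ↦ k) = (k + 1) ^ n := by
    simp only [Pi.card_Iic, Nat.card_Iic, Finset.prod_const, Finset.card_univ, Fintype.card_fin]
  rw [← hgrid]
  refine (hc.comp_isometry (isometry_natCast_comp (Fin n))).card_le_mul fun V hV hcopy ↦ ?_
  exact card_le_sauerBound (fun x hx ↦ Finset.mem_Iic.1 (hV hx))
    fun h ↦ hcopy ((hasCopy_box_Iic m k).trans h)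

end Grid

/-! ### Greedy covering -/

section Cover

variable {α β : Type*} [Fintype β] {r : α → β → Prop} [∀ a, DecidablePred (r a)] {p : ℝ}

lemma exists_mul_card_le_card_filter [Nonempty β]
    (hr : ∀ a, p * Fintype.card β ≤ #{b | r a b}) (U : Finset α) :
    ∃ b, p * #U ≤ #{a ∈ U | r a b} := by
  have hsum : ∑ _b : β, p * #U ≤ ∑ b : β, (#{a ∈ U | r a b} : ℝ) :=
    calc ∑ _b : β, p * #U = ∑ _a ∈ U, p * Fintype.card β := by
          simp only [Finset.sum_const, Finset.card_univ, nsmul_eq_mul]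
          ring
      _ ≤ ∑ a ∈ U, (#{b | r a b} : ℝ) := Finset.sum_le_sum fun a _ ↦ hr a
      _ = ∑ b : β, (#{a ∈ U | r a b} : ℝ) := by
          exact_mod_cast Finset.sum_card_bipartiteAbove_eq_sum_card_bipartiteBelow r
  obtain ⟨b, -, hb⟩ := Finset.exists_le_of_sum_le Finset.univ_nonempty hsum
  exact ⟨b, hb⟩

variable [Fintype α]

lemma exists_cover_outside_card_le [Nonempty β] (hp : p ≤ 1)
    (hr : ∀ a, p * Fintype.card β ≤ #{b | r a b}) (N : ℕ) :
    ∃ (S : Finset β) (U : Finset α), #S ≤ N ∧ (#U : ℝ) ≤ (1 - p) ^ N * Fintype.card α ∧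
      ∀ a ∉ U, ∃ b ∈ S, r a b := by
  classical
  induction N with
  | zero => exact ⟨∅, Finset.univ, by simp⟩
  | succ N ih =>
    obtain ⟨S, U, hSN, hU, hcov⟩ := ih
    obtain ⟨b, hb⟩ := exists_mul_card_le_card_filter hr U
    have hsplit : (#{a ∈ U | r a b} : ℝ) + #{a ∈ U | ¬ r a b} = #U := by
      exact_mod_cast Finset.card_filter_add_card_filter_not (s := U) (fun a ↦ r a b)
    refine ⟨insert b S, {a ∈ U | ¬ r a b}, (Finset.card_insert_le b S).trans (by lia), ?_,
      fun a ha ↦ ?_⟩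
    · calc (#{a ∈ U | ¬ r a b} : ℝ) ≤ (1 - p) * #U := by linarith
        _ ≤ (1 - p) * ((1 - p) ^ N * Fintype.card α) :=
            mul_le_mul_of_nonneg_left hU (sub_nonneg.2 hp)
        _ = (1 - p) ^ (N + 1) * Fintype.card α := by ring
    · by_cases hab : r a b
      · exact ⟨b, Finset.mem_insert_self b S, hab⟩
      · obtain ⟨b', hb', hab'⟩ := hcov a fun haU ↦ ha (Finset.mem_filter.2 ⟨haU, hab⟩)
        exact ⟨b', Finset.mem_insert_of_mem hb', hab'⟩

lemma exists_cover_card_le_add [Nonempty β] (hp₀ : 0 < p) (hp : p ≤ 1)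
    (hr : ∀ a, p * Fintype.card β ≤ #{b | r a b}) (N : ℕ) :
    ∃ S : Finset β, (∀ a, ∃ b ∈ S, r a b) ∧
      (#S : ℝ) ≤ N + (1 - p) ^ N * Fintype.card α := by
  classical
  obtain ⟨S, U, hSN, hU, hcov⟩ := exists_cover_outside_card_le hp hr N
  have hex (a : α) : ∃ b, r a b := by
    have hpos : (0 : ℝ) < #{b | r a b} :=
      (mul_pos hp₀ (Nat.cast_pos.2 Fintype.card_pos)).trans_le (hr a)
    obtain ⟨b, hb⟩ := Finset.card_pos.1 (Nat.cast_pos.1 hpos)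
    exact ⟨b, (Finset.mem_filter_univ b).1 hb⟩
  choose g hg using hex
  refine ⟨S ∪ U.image g, fun a ↦ ?_, ?_⟩
  · by_cases ha : a ∈ U
    · exact ⟨g a, Finset.mem_union_right _ (Finset.mem_image_of_mem g ha), hg a⟩
    · obtain ⟨b, hbS, hab⟩ := hcov a ha
      exact ⟨b, Finset.mem_union_left _ hbS, hab⟩
  · have hcard : #(S ∪ U.image g) ≤ N + #U :=
      (Finset.card_union_le _ _).trans (add_le_add hSN Finset.card_image_le)
    calc (#(S ∪ U.image g) : ℝ) ≤ N + #U := by exact_mod_cast hcard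
      _ ≤ N + (1 - p) ^ N * Fintype.card α := by gcongr

lemma exists_cover_card_le [Nonempty β] (hp₀ : 0 < p) (hp : p ≤ 1)
    (hr : ∀ a, p * Fintype.card β ≤ #{b | r a b}) {L : ℝ} (hL : 0 ≤ L) :
    ∃ S : Finset β, (∀ a, ∃ b ∈ S, r a b) ∧
      (#S : ℝ) ≤ L / p + 1 + Real.exp (-L) * Fintype.card α := by
  obtain ⟨S, hcov, hS⟩ := exists_cover_card_le_add hp₀ hp hr ⌈L / p⌉₊
  have hceil : L ≤ ⌈L / p⌉₊ * p := (div_le_iff₀ hp₀).1 (Nat.le_ceil _)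
  have hexp : (1 - p) ^ ⌈L / p⌉₊ ≤ Real.exp (-L) :=
    calc (1 - p) ^ ⌈L / p⌉₊ ≤ Real.exp (-p) ^ ⌈L / p⌉₊ :=
          pow_le_pow_left₀ (sub_nonneg.2 hp) (Real.one_sub_le_exp_neg p) _
      _ = Real.exp (-(⌈L / p⌉₊ * p)) := by rw [← Real.exp_nat_mul, mul_neg]
      _ ≤ Real.exp (-L) := Real.exp_le_exp.2 (neg_le_neg hceil)
  refine ⟨S, hcov, hS.trans ?_⟩
  gcongr
  exact (Nat.ceil_lt_add_one (div_nonneg hL hp₀.le)).le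

end Cover

lemma card_filter_forall_ne {ι γ : Type*} [Fintype ι] [DecidableEq ι] [Fintype γ] [DecidableEq γ]
    (u : ι → γ) :
    #{t : ι → γ | ∀ i, u i ≠ t i} = (Fintype.card γ - 1) ^ Fintype.card ι := by
  have hpi : ({t : ι → γ | ∀ i, u i ≠ t i} : Finset (ι → γ)) =
      Fintype.piFinset fun i ↦ Finset.univ.erase (u i) := by
    ext t
    simp [Fintype.mem_piFinset, eq_comm]
  simp [hpi, Fintype.card_piFinset]

lemma exists_cover_forall_ne (ι : Type*) {γ : Type*} [Fintype ι] [Fintype γ] {k : ℕ} (hk : k ≠ 0)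
    (hγ : Fintype.card γ = k + 1) :
    ∃ T : Finset (ι → γ), (∀ u : ι → γ, ∃ t ∈ T, ∀ i, u i ≠ t i) ∧
      (#T : ℝ) ≤ (Fintype.card ι * Real.log k + 2) * (((k : ℝ) + 1) / k) ^ Fintype.card ι := by
  classical
  have hk₀ : (0 : ℝ) < k := by positivity
  have : Nonempty γ := Fintype.card_pos_iff.1 (by lia)
  set d := Fintype.card ι
  set ρ : ℝ := (((k : ℝ) + 1) / k) ^ d with hρ
  have one_le_ρ : 1 ≤ ρ := one_le_pow₀ ((one_le_div hk₀).2 (by linarith))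
  have hcard : (Fintype.card (ι → γ) : ℝ) = (k + 1) ^ d := by simp [hγ, d]
  obtain ⟨T, hT, hTcard⟩ := exists_cover_card_le (r := fun u t : ι → γ ↦ ∀ i, u i ≠ t i)
    (inv_pos.2 (one_pos.trans_le one_le_ρ)) (inv_le_one_of_one_le₀ one_le_ρ)
    (fun u ↦ by
      rw [card_filter_forall_ne, hγ, hcard, hρ, ← inv_pow, inv_div, div_pow, Nat.add_sub_cancel,
        Nat.cast_pow, div_mul_cancel₀ _ (by positivity)])
    (mul_nonneg (Nat.cast_nonneg d) (Real.log_natCast_nonneg k))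
  refine ⟨T, hT, hTcard.trans ?_⟩
  have hexp : Real.exp (-(d * Real.log k)) * (k + 1) ^ d = ρ := by
    rw [Real.exp_neg, Real.exp_nat_mul, Real.exp_log hk₀, hρ, div_pow, inv_mul_eq_div]
  rw [hcard, hexp, div_inv_eq_mul]
  linarith

/-! ### Batons in `ℝ^n` and residues -/

lemma exists_eq_add_of_dist_le {q : ℕ → ℝ} {k : ℕ}
    (hq : ∀ a ≤ k, ∀ b ≤ k, dist (q a) (q b) ≤ dist a b) (hk : (k : ℝ) ≤ dist (q 0) (q k)) :
    ∃ z : ℝ, ∀ j ≤ k, ∃ l ≤ k, q l = z + j := by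
  have hbounds : ∀ l ≤ k, |q 0 - q l| ≤ l ∧ |q l - q k| ≤ k - l := by
    intro l hl
    have hlk : (l : ℝ) ≤ k := Nat.cast_le.2 hl
    have h₀ := hq 0 (Nat.zero_le k) l hl
    have h₁ := hq l hl k le_rfl
    rw [Real.dist_eq, Nat.dist_eq] at h₀ h₁
    rw [Nat.cast_zero, zero_sub, abs_neg, Nat.abs_cast] at h₀
    rw [abs_sub_comm (l : ℝ), abs_of_nonneg (sub_nonneg.2 hlk)] at h₁
    exact ⟨h₀, h₁⟩
  rw [Real.dist_eq] at hk
  obtain hdec | hinc := le_abs.1 hk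
  · refine ⟨q k, fun j hj ↦ ⟨k - j, Nat.sub_le k j, ?_⟩⟩
    obtain ⟨h₀, h₁⟩ := hbounds (k - j) (Nat.sub_le k j)
    rw [Nat.cast_sub hj] at h₀ h₁
    linarith [(abs_le.1 h₀).2, (abs_le.1 h₁).2]
  · refine ⟨q 0, fun j hj ↦ ⟨j, hj, ?_⟩⟩
    obtain ⟨h₀, h₁⟩ := hbounds j hj
    linarith [(abs_le.1 h₀).1, (abs_le.1 h₁).1]

lemma HasCopy.exists_coord_progression {ι : Type*} [Fintype ι] {k : ℕ} (hk : k ≠ 0)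
    {A : Set (ι → ℝ)} (h : HasCopy (Iic k) A) :
    ∃ (i : ι) (z : ℝ), ∀ j ≤ k, ∃ x ∈ A, x i = z + j := by
  obtain ⟨f, hf, hfA⟩ := h
  have hends : dist (f 0) (f k) = k := by
    rw [hf 0 (mem_Iic.2 (Nat.zero_le k)) k self_mem_Iic, Nat.dist_eq, Nat.cast_zero, zero_sub,
      abs_neg, Nat.abs_cast]
  obtain ⟨i, hi⟩ : ∃ i, (k : ℝ) ≤ dist (f 0 i) (f k i) := by
    by_contra! hlt
    exact ((dist_pi_lt_iff (by positivity)).2 hlt).ne hends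
  obtain ⟨z, hz⟩ := exists_eq_add_of_dist_le (q := fun j ↦ f j i)
    (fun a ha b hb ↦ (dist_le_pi_dist (f a) (f b) i).trans_eq (hf a ha b hb)) hi
  refine ⟨i, z, fun j hj ↦ ?_⟩
  obtain ⟨l, hl, hlj⟩ := hz j hj
  exact ⟨f l, hfA (mem_image_of_mem f hl), hlj⟩

lemma exists_le_intCast_add_eq (k : ℕ) (z : ℤ) (t : ZMod (k + 1)) :
    ∃ j ≤ k, ((z + (j : ℕ) : ℤ) : ZMod (k + 1)) = t := by
  refine ⟨(t - z).val, Nat.lt_succ_iff.1 (ZMod.val_lt _), ?_⟩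
  rw [Int.cast_add, Int.cast_natCast, ZMod.natCast_zmod_val, add_sub_cancel]

lemma not_hasCopy_floor_ne {ι : Type*} [Fintype ι] {k : ℕ} (hk : k ≠ 0) (t : ι → ZMod (k + 1)) :
    ¬ HasCopy (Iic k) {x : ι → ℝ | ∀ i, ((⌊x i⌋ : ℤ) : ZMod (k + 1)) ≠ t i} := by
  intro h
  obtain ⟨i, z, hz⟩ := h.exists_coord_progression hk
  obtain ⟨j, hj, hjt⟩ := exists_le_intCast_add_eq k ⌊z⌋ (t i)
  obtain ⟨x, hx, hxi⟩ := hz j hj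
  apply hx i
  rw [hxi, Int.floor_add_natCast, hjt]

lemma exists_isCopyFree_box (m n : ℕ) {k : ℕ} (hk : k ≠ 0) :
    ∃ (T : Finset (Fin n → ZMod (k + 1))) (c : (Fin n → ℝ) → T),
      IsCopyFree (box (m + 1) k) c ∧
        (#T : ℝ) ≤ (n * Real.log k + 2) * (((k : ℝ) + 1) / k) ^ n := by
  obtain ⟨T, hT, hTcard⟩ := exists_cover_forall_ne (Fin n) hk (ZMod.card (k + 1))
  rw [Fintype.card_fin] at hTcard
  choose g hgT hg using hT
  let residues (x : Fin n → ℝ) (i : Fin n) : ZMod (k + 1) := (⌊x i⌋ : ℤ)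
  refine ⟨T, fun x ↦ ⟨g (residues x), hgT _⟩, fun t h ↦ ?_, hTcard⟩
  refine not_hasCopy_floor_ne hk t.1 (((hasCopy_Iic_box m k).trans h).mono_s2 ?_)
  rintro x rfl
  exact hg (residues x)

/-! ### Bounds on the chromatic number -/

theorem chrom_box_le (m n : ℕ) {k : ℕ} (hk : k ≠ 0) :
    (chrom (box (m + 1) k) n : ℝ) ≤ (n * Real.log k + 2) * (((k : ℝ) + 1) / k) ^ n := by
  obtain ⟨T, c, hc, hT⟩ := exists_isCopyFree_box m n hk
  have hle : chrom (box (m + 1) k) n ≤ #T := (chrom_le_card hc).trans_eq (Fintype.card_coe T)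
  exact (Nat.cast_le.2 hle).trans hT

theorem pow_le_sauerBound_mul_chrom_box (m n : ℕ) {k : ℕ} (hk : k ≠ 0) :
    (k + 1) ^ n ≤ sauerBound k (m + 1) n * chrom (box (m + 1) k) n := by
  obtain ⟨_, _, hc, -⟩ := exists_isCopyFree_box m n hk
  obtain ⟨_, hc'⟩ := exists_isCopyFree_chrom hc
  simpa only [Fintype.card_fin] using hc'.pow_le_sauerBound_mul

lemma isEquivalent_choose_mul_pow_sub (m : ℕ) {k : ℕ} (hk : k ≠ 0) :
    (fun n : ℕ ↦ (n.choose m * k ^ (n - m) : ℝ)) ~[atTop]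
      fun n : ℕ ↦ (n : ℝ) ^ m / m ! * (k ^ n / k ^ m) := by
  have hk₀ : (k : ℝ) ≠ 0 := Nat.cast_ne_zero.2 hk
  refine IsEquivalent.mul (isEquivalent_choose m) (EventuallyEq.isEquivalent ?_)
  filter_upwards [eventually_ge_atTop m] with n hn
  exact (eq_div_iff (pow_ne_zero m hk₀)).2 (pow_sub_mul_pow _ hn)

theorem isEquivalent_sauerBound (m : ℕ) {k : ℕ} (hk : k ≠ 0) :
    (fun n : ℕ ↦ (sauerBound k (m + 1) n : ℝ)) ~[atTop]
      fun n : ℕ ↦ (n : ℝ) ^ m / m ! * (k ^ n / k ^ m) := by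
  induction m with
  | zero => simpa [sauerBound] using IsEquivalent.refl
  | succ m ih =>
    have hrec : (fun n : ℕ ↦ (sauerBound k (m + 1 + 1) n : ℝ)) =
        (fun n : ℕ ↦ (sauerBound k (m + 1) n : ℝ)) +
          fun n : ℕ ↦ (n.choose (m + 1) * k ^ (n - (m + 1)) : ℝ) := by
      ext n
      simp only [sauerBound, Finset.sum_range_succ _ (m + 1), Pi.add_apply]
      push_cast
      rfl
    have hlittle : (fun n : ℕ ↦ (n : ℝ) ^ m / m ! * (k ^ n / k ^ m)) =o[atTop]
        fun n : ℕ ↦ (n : ℝ) ^ (m + 1) / (m + 1)! * (k ^ n / k ^ (m + 1)) := by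
      have hpow : (fun n : ℕ ↦ (n : ℝ) ^ m) =o[atTop] fun n : ℕ ↦ (n : ℝ) ^ (m + 1) :=
        (isLittleO_pow_pow_atTop_of_lt m.lt_succ_self).comp_tendsto tendsto_natCast_atTop_atTop
      have hmul := hpow.mul_isBigO (isBigO_refl (fun n : ℕ ↦ (k : ℝ) ^ n) atTop)
      refine ((hmul.const_mul_left (1 / (m ! * (k : ℝ) ^ m))).const_mul_right
        (c := 1 / ((m + 1)! * (k : ℝ) ^ (m + 1))) (by positivity)).congr ?_ ?_
      all_goals
        intro n
        ring
    rw [hrec]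
    exact (ih.trans_isLittleO hlittle).add_isEquivalent (isEquivalent_choose_mul_pow_sub _ hk)

lemma eventually_one_sub_mul_le_of_isEquivalent {ι : Type*} {l : Filter ι} {u v : ι → ℝ}
    (huv : u ~[l] v) (hv : ∀ i, 0 ≤ v i) {ε : ℝ} (hε : 0 < ε) :
    ∀ᶠ i in l, (1 - ε) * v i ≤ u i := by
  filter_upwards [huv.isLittleO.def hε] with i hi
  rw [Pi.sub_apply, Real.norm_eq_abs, Real.norm_eq_abs, abs_of_nonneg (hv i)] at hi
  linarith [(abs_le.1 hi).1]

theorem eventually_le_chrom_box (m : ℕ) {k : ℕ} (hk : k ≠ 0) {ε : ℝ} (hε : 0 < ε) :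
    ∀ᶠ n : ℕ in atTop,
      (1 - ε) * ((m ! : ℝ) * (k : ℝ) ^ m / (n : ℝ) ^ m) * (((k : ℝ) + 1) / k) ^ n ≤
        chrom (box (m + 1) k) n := by
  have hequiv : (fun n : ℕ ↦ ((k : ℝ) + 1) ^ n / sauerBound k (m + 1) n) ~[atTop]
      fun n ↦ ((k : ℝ) + 1) ^ n / ((n : ℝ) ^ m / m ! * (k ^ n / k ^ m)) :=
    IsEquivalent.refl.div (isEquivalent_sauerBound m hk)
  filter_upwards [eventually_one_sub_mul_le_of_isEquivalent hequiv (fun n ↦ by positivity) hε]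
    with n hn
  have hpow : ((k : ℝ) + 1) ^ n ≤ chrom (box (m + 1) k) n * sauerBound k (m + 1) n := by
    rw [mul_comm]
    exact_mod_cast pow_le_sauerBound_mul_chrom_box m n hk
  calc (1 - ε) * ((m ! : ℝ) * (k : ℝ) ^ m / (n : ℝ) ^ m) * (((k : ℝ) + 1) / k) ^ n
      = (1 - ε) * (((k : ℝ) + 1) ^ n / ((n : ℝ) ^ m / m ! * (k ^ n / k ^ m))) := by
        rw [div_pow]
        simp only [div_eq_mul_inv, mul_inv, inv_inv]
        ring
    _ ≤ ((k : ℝ) + 1) ^ n / sauerBound k (m + 1) n := hn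
    _ ≤ chrom (box (m + 1) k) n :=
        div_le_of_le_mul₀ (Nat.cast_nonneg _) (Nat.cast_nonneg _) hpow

theorem eventually_chrom_box_le (m : ℕ) {k : ℕ} (hk : 2 ≤ k) {ε : ℝ} (hε : 0 < ε) :
    ∀ᶠ n : ℕ in atTop, (chrom (box (m + 1) k) n : ℝ) ≤
      (1 + ε) * Real.log k * (n : ℝ) * (((k : ℝ) + 1) / k) ^ n := by
  have hlog : 0 < Real.log k := Real.log_pos (Nat.one_lt_cast.2 hk)
  have hlarge : Tendsto (fun n : ℕ ↦ ε * Real.log k * (n : ℝ)) atTop atTop :=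
    tendsto_natCast_atTop_atTop.const_mul_atTop (mul_pos hε hlog)
  filter_upwards [hlarge.eventually_ge_atTop 2] with n hn
  refine (chrom_box_le m n (by lia)).trans (mul_le_mul_of_nonneg_right ?_ (by positivity))
  linarith

lemma tendsto_mul_rpow_mul_pow_root {C r : ℝ} (hC : 0 < C) (hr : 0 ≤ r) (b : ℝ) :
    Tendsto (fun n : ℕ ↦ (C * (n : ℝ) ^ b * r ^ n) ^ (1 / (n : ℝ))) atTop (𝓝 r) := by
  have hconst : Tendsto (fun n : ℕ ↦ C ^ (1 / (n : ℝ))) atTop (𝓝 1) := by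
    simpa only [Real.rpow_zero, Function.comp_def] using
      (Real.continuousAt_const_rpow hC.ne').tendsto.comp
        (tendsto_one_div_atTop_nhds_zero_nat (𝕜 := ℝ))
  have hpoly : Tendsto (fun n : ℕ ↦ ((n : ℝ) ^ (1 / (n : ℝ))) ^ b) atTop (𝓝 1) := by
    simpa only [Real.one_rpow, Function.comp_apply] using
      (tendsto_rpow_div.comp tendsto_natCast_atTop_atTop).rpow_const (p := b) (Or.inl one_ne_zero)
  have hprod := (hconst.mul hpoly).mul_const r
  rw [one_mul, one_mul] at hprod
  refine hprod.congr' ?_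
  filter_upwards [eventually_ne_atTop 0] with n hn
  have hn₀ : (0 : ℝ) ≤ n := Nat.cast_nonneg n
  rw [Real.mul_rpow (by positivity) (by positivity), Real.mul_rpow hC.le (by positivity),
    one_div, Real.pow_rpow_inv_natCast hr hn, ← Real.rpow_mul hn₀, ← Real.rpow_mul hn₀, mul_comm b]

theorem tendsto_chrom_box_root (m : ℕ) {k : ℕ} (hk : k ≠ 0) :
    Tendsto (fun n : ℕ ↦ (chrom (box (m + 1) k) n : ℝ) ^ (1 / (n : ℝ))) atTop
      (𝓝 (((k : ℝ) + 1) / k)) := by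
  have hr : 0 ≤ ((k : ℝ) + 1) / k := by positivity
  have hlower := tendsto_mul_rpow_mul_pow_root (C := 1 / 2 * (m ! * (k : ℝ) ^ m))
    (by positivity) hr (-m)
  have hupper := tendsto_mul_rpow_mul_pow_root (C := Real.log k + 2)
    (add_pos_of_nonneg_of_pos (Real.log_natCast_nonneg k) two_pos) hr 1
  refine tendsto_of_tendsto_of_tendsto_of_le_of_le' hlower hupper ?_ ?_
  · filter_upwards [eventually_le_chrom_box m hk (one_half_pos (α := ℝ))] with n hn
    refine Real.rpow_le_rpow (by positivity) (le_of_eq_of_le ?_ hn) (by positivity)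
    rw [Real.rpow_neg (Nat.cast_nonneg n), Real.rpow_natCast]
    ring
  · filter_upwards [eventually_ge_atTop 1] with n hn
    have hn₁ : (1 : ℝ) ≤ n := Nat.one_le_cast.2 hn
    refine Real.rpow_le_rpow (by positivity) ((chrom_box_le m n hk).trans ?_) (by positivity)
    rw [Real.rpow_one]
    gcongr
    linarith

/-- For `k ≥ 2` and `m ≥ 1`:
`(1+o(1)) ((m-1)! k^(m-1) / n^(m-1)) ((k+1)/k)^n ≤ χ(ℝ^n_∞, B_k^m)
  ≤ (1+o(1)) (ln k) n ((k+1)/k)^n`,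
and in particular `χ(ℝ^n_∞, B_k^m)^(1/n) → (k+1)/k`. -/
theorem chi_box_power (k m : ℕ) (hk : 2 ≤ k) (hm : 1 ≤ m) :
    (∀ ε : ℝ, 0 < ε → ∃ N : ℕ, ∀ n : ℕ, N ≤ n →
      (1 - ε) * ((Nat.factorial (m - 1) : ℝ) * (k : ℝ) ^ (m - 1) / (n : ℝ) ^ (m - 1)) *
          (((k : ℝ) + 1) / k) ^ n ≤ (chrom (box m k) n : ℝ) ∧
      (chrom (box m k) n : ℝ) ≤ (1 + ε) * Real.log k * (n : ℝ) * (((k : ℝ) + 1) / k) ^ n) ∧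
    Tendsto (fun n : ℕ => (chrom (box m k) n : ℝ) ^ (1 / (n : ℝ)))
      atTop (nhds (((k : ℝ) + 1) / k)) := by
  obtain ⟨m, rfl⟩ := Nat.exists_eq_add_of_le' hm
  refine ⟨fun ε hε ↦ eventually_atTop.1 ?_, tendsto_chrom_box_root m (by lia)⟩
  exact (eventually_le_chrom_box m (by lia) hε).and (eventually_chrom_box_le m hk hε)
end

section
/- Let H be a hyperrectangle, i.e., the Cartesian product of finitely many two-point metric spaces (each two-point space having an arbitrary positive distance between its points), with the max metric on the product. Then lim_{n→∞} χ(ℝ^n_∞, H)^{1/n} = 2; that is, χ(ℝ^n_∞, H) = (2 + o(1))^n. -/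
open Set Filter

/-!
Points at max-norm distance `δ` differ by exactly `δ` in some coordinate, so the `2 ^ n` parity
patterns of the `⌊x i / δ⌋` separate them. For the converse, consider words of length `n` over the
alphabet `F × {±1}`, where `F` is a box of side `L` in `ℕ^m`, mapped to `ℝ` by `v ↦ ∑ j, v j * d j`.
In a direction `p`, the labels `(v, 1)` and `(v + e p, -1)` form a cell; there are `2 * L ^ m`
labels but at most `(L + 1) ^ m` cells. Distinct words with the same cells are at distance `d p` and
span the same box of side `d p`, the sign telling on which side of its point each label sees the
box.

Hence if faces with free directions `P` sit in these boxes at two such words `x ≠ y`, and every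
`d i` with `i ∈ P` is at most `d p`, then the two faces are everywhere at distance at most `d p`
from each other. Requiring both faces to be constant at a position where `x` and `y` differ makes
this distance exactly `d p`, so together they form a face with free directions `insert p P`. By the
pigeonhole principle, this produces hyperrectangles in every set of more than
`((L + 1) ^ m) ^ n * poly n` words, so every colour class contains at most that many of the
`(2 * L ^ m) ^ n` words. Finally let `L → ∞`.
-/

section ChromaticNumber

variable {α β : Type*} [MetricSpace α] [MetricSpace β] {M : Set α} {n : ℕ}

theorem HasCopy.exists_dist_eq {A : Set β} (h : HasCopy M A) {x y : α} (hx : x ∈ M)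
    (hy : y ∈ M) : ∃ u ∈ A, ∃ v ∈ A, dist u v = dist x y := by
  obtain ⟨f, hf, hfA⟩ := h
  exact ⟨f x, hfA (mem_image_of_mem f hx), f y, hfA (mem_image_of_mem f hy), hf x hx y hy⟩

theorem exists_fin_coloring {C : Type*} [Fintype C] (c : (Fin n → ℝ) → C)
    (hc : ∀ q, ¬ HasCopy M {x | c x = q}) :
    ∃ c' : (Fin n → ℝ) → Fin (Fintype.card C), ∀ q, ¬ HasCopy M {x | c' x = q} := by
  refine ⟨fun x => Fintype.equivFin C (c x), fun q => ?_⟩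
  simpa only [Equiv.eq_symm_apply] using hc ((Fintype.equivFin C).symm q)

theorem floor_div_parity_ne {δ u v : ℝ} (hδ : 0 < δ) (huv : dist u v = δ) :
    (⌊u / δ⌋ : ZMod 2) ≠ ⌊v / δ⌋ := by
  wlog h : v ≤ u generalizing u v
  · exact (this (dist_comm u v ▸ huv) (le_of_not_ge h)).symm
  have huv' : u = v + δ := by
    rw [Real.dist_eq, abs_of_nonneg (sub_nonneg.2 h)] at huv
    linarith
  rw [huv', add_div, div_self hδ.ne', Int.floor_add_one, Int.cast_add, Int.cast_one]
  simp

theorem exists_two_pow_coloring (hM : M.Nontrivial) (n : ℕ) :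
    ∃ c : (Fin n → ℝ) → Fin (2 ^ n), ∀ q, ¬ HasCopy M {x | c x = q} := by
  obtain ⟨x, hx, y, hy, hxy⟩ := hM
  have hδ : 0 < dist x y := dist_pos.2 hxy
  have hparity : ∀ q, ¬ HasCopy M
      {z : Fin n → ℝ | (fun i => (⌊z i / dist x y⌋ : ZMod 2)) = q} := by
    intro q hcopy
    obtain ⟨u, hu, v, hv, huv⟩ := hcopy.exists_dist_eq hx hy
    obtain ⟨⟨i, hi⟩, -⟩ := (dist_pi_eq_iff hδ).1 huv
    exact floor_div_parity_ne hδ hi (congrFun (hu.trans hv.symm) i)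
  have hcard : Fintype.card (Fin n → ZMod 2) = 2 ^ n := by simp [ZMod.card]
  exact hcard ▸ exists_fin_coloring _ hparity

theorem chrom_le_two_pow (hM : M.Nontrivial) (n : ℕ) : chrom M n ≤ 2 ^ n :=
  Nat.sInf_le (exists_two_pow_coloring hM n)

theorem exists_chrom_coloring (hM : M.Nontrivial) (n : ℕ) :
    ∃ c : (Fin n → ℝ) → Fin (chrom M n), ∀ q, ¬ HasCopy M {x | c x = q} :=
  Nat.sInf_mem (s := {N | ∃ c : (Fin n → ℝ) → Fin N, ∀ q, ¬ HasCopy M {x | c x = q}})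
    ⟨_, exists_two_pow_coloring hM n⟩

end ChromaticNumber

section Hyperrectangle

variable {ι : Type*} {d : ι → ℝ}

/-- The vertex set of the box `∏ i, [0, d i]`: the product of the two-point spaces `{0, d i}`. -/
def hyperrectangle (d : ι → ℝ) : Set (ι → ℝ) := {x | ∀ i, x i = 0 ∨ x i = d i}

theorem hyperrectangle_nontrivial {p : ι} (hp : d p ≠ 0) : (hyperrectangle d).Nontrivial :=
  ⟨0, fun _ => Or.inl rfl, d, fun _ => Or.inr rfl, fun h => hp (congrFun h p).symm⟩

theorem dist_apply_eq_of_mem_hyperrectangle {u v : ι → ℝ} (hu : u ∈ hyperrectangle d)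
    (hv : v ∈ hyperrectangle d) {i : ι} (huv : u i ≠ v i) : dist (u i) (v i) = |d i| := by
  rcases hu i with hui | hui <;> rcases hv i with hvi | hvi <;> simp_all [Real.dist_eq]

variable [Fintype ι]

theorem dist_eq_of_mem_hyperrectangle {u v : ι → ℝ} (hu : u ∈ hyperrectangle d)
    (hv : v ∈ hyperrectangle d) {p : ι} (hp : u p ≠ v p)
    (hmax : ∀ i, u i ≠ v i → |d i| ≤ |d p|) : dist u v = |d p| := by
  apply le_antisymm
  · refine (dist_pi_le_iff (abs_nonneg _)).2 fun i => ?_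
    by_cases hi : u i = v i
    · simp [hi]
    · exact (dist_apply_eq_of_mem_hyperrectangle hu hv hi).trans_le (hmax i hi)
  · exact (dist_apply_eq_of_mem_hyperrectangle hu hv hp).symm.trans_le (dist_le_pi_dist u v p)

variable {X : Type*} [PseudoMetricSpace X] {P : Finset ι} {f f' : (ι → ℝ) → X}

/-- `f` is an isometry on each face of the hyperrectangle whose free coordinates are those in `P`.
The remaining coordinates may be fixed arbitrarily, and no condition relates different faces. -/
def IsometricOnFaces (d : ι → ℝ) (P : Finset ι) (f : (ι → ℝ) → X) : Prop :=
  ∀ u ∈ hyperrectangle d, ∀ v ∈ hyperrectangle d, (∀ i ∉ P, u i = v i) →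
    dist (f u) (f v) = dist u v

theorem IsometricOnFaces.of_const (x : X) : IsometricOnFaces d ∅ fun _ => x := by
  intro u _ v _ huv
  rw [funext fun i => huv i (Finset.notMem_empty i), dist_self, dist_self]

theorem IsometricOnFaces.glue [DecidableEq ι] {p : ι} (hmax : ∀ i ∈ P, |d i| ≤ |d p|)
    (hf : IsometricOnFaces d P f) (hf' : IsometricOnFaces d P f')
    (hcross : ∀ u v, dist (f u) (f' v) = |d p|) :
    IsometricOnFaces d (insert p P) fun u => if u p = 0 then f u else f' u := by
  intro u hu v hv huv
  have hP : u p = v p → ∀ i ∉ P, u i = v i := fun hp i hi => by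
    by_cases hip : i = p
    · exact hip ▸ hp
    · exact huv i (by simp [hip, hi])
  have hdist : u p ≠ v p → dist u v = |d p| := fun hp => by
    refine dist_eq_of_mem_hyperrectangle hu hv hp fun i hi => ?_
    rcases Finset.mem_insert.1 (not_imp_comm.1 (huv i) hi) with rfl | hiP
    exacts [le_rfl, hmax i hiP]
  by_cases hu0 : u p = 0 <;> by_cases hv0 : v p = 0 <;> simp only [hu0, hv0, if_true, if_false]
  · exact hf u hu v hv (hP (hu0.trans hv0.symm))
  · exact (hcross u v).trans (hdist fun h => hv0 (h ▸ hu0)).symm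
  · exact (dist_comm _ _).trans ((hcross v u).trans (hdist fun h => hu0 (h.trans hv0)).symm)
  · exact hf' u hu v hv (hP (((hu p).resolve_left hu0).trans ((hv p).resolve_left hv0).symm))

end Hyperrectangle

section OrientedLabel

variable {Λ : Type*} [AddRightCancelMonoid Λ] {pos : Λ →+ ℝ} {a : Λ} {s t : Λ × ℤˣ}

/-- The segment of length `r` issuing from the label `s = (g, ε)`, from the point `pos g` towards
the side given by the sign `ε`. -/
def orientedArm (pos : Λ →+ ℝ) (r : ℝ) (s : Λ × ℤˣ) : Set ℝ :=
  uIcc (pos s.1) (pos s.1 + s.2 • r)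

/-- The cell of a label with respect to the step `a`, named by its right end: `(g, 1)` and
`(g + a, -1)` are the two labels in the cell `g + a`. -/
def orientedCell (a : Λ) (s : Λ × ℤˣ) : Λ := if s.2 = 1 then s.1 + a else s.1

theorem orientedArm_mono {r r' : ℝ} (hr : 0 ≤ r) (hrr' : r ≤ r') :
    orientedArm pos r s ⊆ orientedArm pos r' s := by
  refine uIcc_subset_uIcc_left ?_
  rcases Int.units_eq_one_or s.2 with hs | hs <;> simp only [hs, one_smul, Units.neg_smul]
  · exact mem_uIcc_of_le (by linarith) (by linarith)
  · exact mem_uIcc_of_ge (by linarith) (by linarith)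

theorem dist_le_of_mem_orientedArm {r x y : ℝ} (hx : x ∈ orientedArm pos r s)
    (hy : y ∈ orientedArm pos r s) : dist x y ≤ |r| := by
  refine (Real.dist_le_of_mem_uIcc hx hy).trans_eq ?_
  rcases Int.units_eq_one_or s.2 with hs | hs <;> simp [hs]

theorem pos_eq_of_orientedCell_eq (hst : s ≠ t) (hcell : orientedCell a s = orientedCell a t) :
    pos t.1 = pos s.1 + s.2 • pos a ∧ pos s.1 = pos t.1 + t.2 • pos a := by
  obtain ⟨g, ε⟩ := s
  obtain ⟨h, η⟩ := t
  rcases Int.units_eq_one_or ε with rfl | rfl <;> rcases Int.units_eq_one_or η with rfl | rfl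
  · obtain rfl : g = h := by simpa [orientedCell] using hcell
    exact absurd rfl hst
  · obtain rfl : g + a = h := by simpa [orientedCell] using hcell
    simp
  · obtain rfl : g = h + a := by simpa [orientedCell] using hcell
    simp
  · obtain rfl : g = h := by simpa [orientedCell] using hcell
    exact absurd rfl hst

theorem orientedArm_eq_of_orientedCell_eq (hcell : orientedCell a s = orientedCell a t) :
    orientedArm pos (pos a) s = orientedArm pos (pos a) t := by
  rcases eq_or_ne s t with rfl | hst
  · rfl
  · obtain ⟨ht, hs⟩ := pos_eq_of_orientedCell_eq (pos := pos) hst hcell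
    rw [orientedArm, orientedArm, ← ht, ← hs, uIcc_comm]

theorem dist_pos_eq_of_orientedCell_eq (hst : s ≠ t)
    (hcell : orientedCell a s = orientedCell a t) : dist (pos s.1) (pos t.1) = |pos a| := by
  rw [(pos_eq_of_orientedCell_eq (pos := pos) hst hcell).1]
  rcases Int.units_eq_one_or s.2 with hs | hs <;> simp [hs]

end OrientedLabel

section AnchoredFace

variable {ι κ Λ : Type*} [Fintype ι] [Fintype κ] [AddRightCancelMonoid Λ]
  {pos : Λ →+ ℝ} {d : ι → ℝ} {A : Finset (κ → Λ × ℤˣ)} {P : Finset ι} {p : ι} {r : ℝ}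
  {T : Finset κ} {x y : κ → Λ × ℤˣ} {a : Λ} {g g' : (ι → ℝ) → κ → Λ × ℤˣ}

/-- The point of `ℝ^κ` represented by a word of oriented labels, forgetting the orientations. -/
def wordPoint (pos : Λ →+ ℝ) (w : κ → Λ × ℤˣ) : κ → ℝ := fun i => pos (w i).1

/-- `g` places an isometric copy of the face of the hyperrectangle with free coordinates `P` in the
set of words `A`, inside the box spanned by the arms of length `r` of the word `x`, and with all
vertices agreeing with `x` at the positions in `T`. -/
structure IsAnchoredFace (pos : Λ →+ ℝ) (d : ι → ℝ) (A : Finset (κ → Λ × ℤˣ)) (P : Finset ι)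
    (r : ℝ) (T : Finset κ) (x : κ → Λ × ℤˣ) (g : (ι → ℝ) → κ → Λ × ℤˣ) : Prop where
  mem : ∀ u, g u ∈ A
  eq_anchor : ∀ u, ∀ i ∈ T, g u i = x i
  mem_arm : ∀ u i, pos (g u i).1 ∈ orientedArm pos r (x i)
  isometricOnFaces : IsometricOnFaces d P fun u => wordPoint pos (g u)

theorem IsAnchoredFace.of_mem (hx : x ∈ A) : IsAnchoredFace pos d A ∅ r T x fun _ => x where
  mem _ := hx
  eq_anchor _ _ _ := rfl
  mem_arm _ _ := left_mem_uIcc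
  isometricOnFaces := .of_const _

theorem IsAnchoredFace.dist_eq [DecidableEq κ] {i : κ} (ha : pos a = d p)
    (hcell : ∀ j, orientedCell a (x j) = orientedCell a (y j)) (hi : x i ≠ y i)
    (hg : IsAnchoredFace pos d A P (d p) (insert i T) x g)
    (hg' : IsAnchoredFace pos d A P (d p) (insert i T) y g') (u v : ι → ℝ) :
    dist (wordPoint pos (g u)) (wordPoint pos (g' v)) = |d p| := by
  apply le_antisymm
  · refine (dist_pi_le_iff (abs_nonneg _)).2 fun j => ?_
    refine dist_le_of_mem_orientedArm (hg.mem_arm u j) ?_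
    rw [← ha, orientedArm_eq_of_orientedCell_eq (hcell j), ha]
    exact hg'.mem_arm v j
  · refine le_trans (le_of_eq ?_) (dist_le_pi_dist _ _ i)
    rw [wordPoint, wordPoint, hg.eq_anchor u i (Finset.mem_insert_self i T),
      hg'.eq_anchor v i (Finset.mem_insert_self i T), ← ha]
    exact (dist_pos_eq_of_orientedCell_eq hi (hcell i)).symm

theorem IsAnchoredFace.glue [DecidableEq ι] [DecidableEq κ] {i : κ} (hd : ∀ i, 0 ≤ d i)
    (ha : pos a = d p) (hmax : ∀ i ∈ P, d i ≤ d p) (hr : d p ≤ r)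
    (hcell : ∀ j, orientedCell a (x j) = orientedCell a (y j)) (hi : x i ≠ y i)
    (hT : ∀ j ∈ T, x j = y j) (hg : IsAnchoredFace pos d A P (d p) (insert i T) x g)
    (hg' : IsAnchoredFace pos d A P (d p) (insert i T) y g') :
    IsAnchoredFace pos d A (insert p P) r T x fun u => if u p = 0 then g u else g' u where
  mem u := by
    split_ifs
    exacts [hg.mem u, hg'.mem u]
  eq_anchor u j hj := by
    split_ifs
    · exact hg.eq_anchor u j (Finset.mem_insert_of_mem hj)
    · exact (hg'.eq_anchor u j (Finset.mem_insert_of_mem hj)).trans (hT j hj).symm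
  mem_arm u j := by
    refine orientedArm_mono (hd p) hr ?_
    split_ifs
    · exact hg.mem_arm u j
    · rw [← ha, orientedArm_eq_of_orientedCell_eq (hcell j), ha]
      exact hg'.mem_arm u j
  isometricOnFaces := by
    simp only [apply_ite (wordPoint pos)]
    refine IsometricOnFaces.glue (fun i hi => ?_) hg.isometricOnFaces hg'.isometricOnFaces
      (hg.dist_eq ha hcell hi hg')
    simpa only [abs_of_nonneg (hd _)] using hmax i hi

open Classical in
/-- The words of `A` at which no face with free coordinates `P` can be anchored. -/
noncomputable def facelessWords (pos : Λ →+ ℝ) (d : ι → ℝ) (A : Finset (κ → Λ × ℤˣ))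
    (P : Finset ι) (r : ℝ) (T : Finset κ) : Finset (κ → Λ × ℤˣ) :=
  {x ∈ A | ¬ ∃ g, IsAnchoredFace pos d A P r T x g}

theorem mem_facelessWords :
    x ∈ facelessWords pos d A P r T ↔ x ∈ A ∧ ¬ ∃ g, IsAnchoredFace pos d A P r T x g := by
  simp only [facelessWords, Finset.mem_filter]

theorem facelessWords_empty : facelessWords pos d A ∅ r T = ∅ :=
  Finset.eq_empty_of_forall_notMem fun _ hx =>
    (mem_facelessWords.1 hx).2 ⟨_, .of_mem (mem_facelessWords.1 hx).1⟩

theorem eq_of_mem_facelessWords_insert [DecidableEq ι] [DecidableEq κ] (hd : ∀ i, 0 ≤ d i)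
    (ha : pos a = d p) (hmax : ∀ i ∈ P, d i ≤ d p) (hr : d p ≤ r)
    (hx : x ∈ facelessWords pos d A (insert p P) r T) (hy : y ∈ A)
    (hx' : ∀ i ∉ T, x ∉ facelessWords pos d A P (d p) (insert i T))
    (hy' : ∀ i ∉ T, y ∉ facelessWords pos d A P (d p) (insert i T))
    (hcell : ∀ j, orientedCell a (x j) = orientedCell a (y j)) (hT : ∀ j ∈ T, x j = y j) :
    x = y := by
  obtain ⟨hxA, hface⟩ := mem_facelessWords.1 hx
  by_contra hne
  obtain ⟨i, hi⟩ := Function.ne_iff.1 hne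
  have hiT : i ∉ T := fun h => hi (hT i h)
  obtain ⟨g, hg⟩ := not_not.1 fun h => hx' i hiT (mem_facelessWords.2 ⟨hxA, h⟩)
  obtain ⟨g', hg'⟩ := not_not.1 fun h => hy' i hiT (mem_facelessWords.2 ⟨hy, h⟩)
  exact hface ⟨_, hg.glue hd ha hmax hr hcell hi hT hg'⟩

end AnchoredFace

section Counting

variable {ι κ Λ : Type*} [Fintype ι] [Fintype κ] [DecidableEq κ] {d : ι → ℝ} {F F' : Finset Λ}

/-- The words of oriented labels with positions in `F` and arbitrary signs. -/
def wordsOn (κ : Type*) [Fintype κ] [DecidableEq κ] (F : Finset Λ) : Finset (κ → Λ × ℤˣ) :=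
  Fintype.piFinset fun _ => F ×ˢ Finset.univ

theorem card_wordsOn : (wordsOn κ F).card = (2 * F.card) ^ Fintype.card κ := by
  simp [wordsOn, mul_comm]

variable [AddRightCancelMonoid Λ] {pos : Λ →+ ℝ} {e : ι → Λ} {A : Finset (κ → Λ × ℤˣ)}

theorem card_facelessWords_insert_le [DecidableEq ι] {P : Finset ι} {p : ι} {r : ℝ}
    (hd : ∀ i, 0 ≤ d i) {a : Λ} (ha : pos a = d p) (hFF' : ∀ s ∈ F, s ∈ F' ∧ s + a ∈ F')
    (hA : A ⊆ wordsOn κ F) (hmax : ∀ i ∈ P, d i ≤ d p) (hr : d p ≤ r) (T : Finset κ) :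
    (facelessWords pos d A (insert p P) r T).card ≤
      F'.card ^ Fintype.card κ * (2 * F.card) ^ T.card +
        ∑ i ∈ Tᶜ, (facelessWords pos d A P (d p) (insert i T)).card := by
  classical
  set B := facelessWords pos d A (insert p P) r T
  set U := Tᶜ.biUnion fun i => facelessWords pos d A P (d p) (insert i T)
  let codes := (Fintype.piFinset fun _ : κ => F') ×ˢ wordsOn T F
  let code : (κ → Λ × ℤˣ) → (κ → Λ) × (T → Λ × ℤˣ) :=
    fun x => (fun i => orientedCell a (x i), fun i => x i)
  have hBA : ∀ x ∈ B \ U, x ∈ A := fun x hx => (mem_facelessWords.1 (Finset.mem_sdiff.1 hx).1).1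
  have hface : ∀ x ∈ B \ U, ∀ i ∉ T, x ∉ facelessWords pos d A P (d p) (insert i T) :=
    fun x hx i hiT hi =>
      (Finset.mem_sdiff.1 hx).2 (Finset.mem_biUnion.2 ⟨i, Finset.mem_compl.2 hiT, hi⟩)
  have hmaps : ∀ x ∈ B \ U, code x ∈ codes := by
    intro x hx
    have hxF : ∀ i, (x i).1 ∈ F := fun i =>
      (Finset.mem_product.1 (Fintype.mem_piFinset.1 (hA (hBA x hx)) i)).1
    simp only [code, codes, wordsOn, Finset.mem_product, Fintype.mem_piFinset, Finset.mem_univ,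
      and_true]
    refine ⟨fun i => ?_, fun i => hxF i⟩
    rw [orientedCell]
    split_ifs
    exacts [(hFF' _ (hxF i)).2, (hFF' _ (hxF i)).1]
  have hinj : Set.InjOn code ↑(B \ U) := fun x hx y hy hxy =>
    eq_of_mem_facelessWords_insert hd ha hmax hr (Finset.mem_sdiff.1 hx).1 (hBA y hy)
      (hface x hx) (hface y hy) (congrFun (congrArg Prod.fst hxy))
      fun i hi => congrFun (congrArg Prod.snd hxy) ⟨i, hi⟩
  calc B.card ≤ (B \ U).card + U.card := Finset.card_le_card_sdiff_add_card
    _ ≤ codes.card + ∑ i ∈ Tᶜ, (facelessWords pos d A P (d p) (insert i T)).card :=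
      add_le_add (Finset.card_le_card_of_injOn code hmaps hinj) Finset.card_biUnion_le
    _ = _ := by simp [codes, card_wordsOn]

theorem card_facelessWords_le (hd : ∀ i, 0 ≤ d i) (he : ∀ i, pos (e i) = d i)
    (hFF' : ∀ s ∈ F, s ∈ F' ∧ ∀ i, s + e i ∈ F') (hA : A ⊆ wordsOn κ F) (P : Finset ι) {r : ℝ}
    (hr : ∀ i ∈ P, d i ≤ r) (T : Finset κ) :
    (facelessWords pos d A P r T).card ≤
      F'.card ^ Fintype.card κ * (2 * F.card) ^ T.card *
        (Fintype.card κ * (2 * F.card) + 1) ^ P.card := by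
  classical
  induction P using Finset.induction_on_max_value d generalizing r T with
  | empty => simp [facelessWords_empty]
  | insert p P hpP hmax ih =>
    set n := Fintype.card κ
    set K := F'.card ^ n
    set σ := 2 * F.card
    set X := (n * σ + 1) ^ P.card
    have hX : 1 ≤ X := Nat.one_le_pow _ _ (Nat.succ_pos _)
    have hanchor : ∀ i ∈ Tᶜ, (facelessWords pos d A P (d p) (insert i T)).card ≤
        K * σ ^ (T.card + 1) * X := fun i hi => by
      simpa only [Finset.card_insert_of_notMem (Finset.mem_compl.1 hi)] using ih hmax (insert i T)
    calc _ ≤ K * σ ^ T.card + ∑ i ∈ Tᶜ, (facelessWords pos d A P (d p) (insert i T)).card :=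
          card_facelessWords_insert_le hd (he p) (fun s hs => ⟨(hFF' s hs).1, (hFF' s hs).2 p⟩)
            hA hmax (hr p (Finset.mem_insert_self p P)) T
      _ ≤ K * σ ^ T.card + Tᶜ.card * (K * σ ^ (T.card + 1) * X) := by
          gcongr
          exact Finset.sum_le_card_nsmul _ _ _ hanchor
      _ ≤ K * σ ^ T.card * X + n * (K * σ ^ (T.card + 1) * X) := by
          gcongr ?_ + ?_ * _
          exacts [Nat.le_mul_of_pos_right _ hX, Finset.card_le_univ _]
      _ = _ := by rw [Finset.card_insert_of_notMem hpP]; ring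

theorem hasCopy_hyperrectangle_of_lt_card (hd : ∀ i, 0 ≤ d i) (he : ∀ i, pos (e i) = d i)
    (hFF' : ∀ s ∈ F, s ∈ F' ∧ ∀ i, s + e i ∈ F') (hA : A ⊆ wordsOn κ F)
    (hcard : F'.card ^ Fintype.card κ *
      (Fintype.card κ * (2 * F.card) + 1) ^ Fintype.card ι < A.card) :
    HasCopy (hyperrectangle d) (wordPoint pos '' (A : Set (κ → Λ × ℤˣ))) := by
  have hfaceless := card_facelessWords_le hd he hFF' hA Finset.univ
    (fun i _ => Finset.single_le_sum (fun j _ => hd j) (Finset.mem_univ i)) ∅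
  rw [Finset.card_empty, pow_zero, mul_one, Finset.card_univ] at hfaceless
  obtain ⟨x, hxA, hx⟩ := Finset.exists_mem_notMem_of_card_lt_card (hfaceless.trans_lt hcard)
  obtain ⟨g, hg⟩ := not_not.1 fun h => hx (mem_facelessWords.2 ⟨hxA, h⟩)
  refine ⟨fun u => wordPoint pos (g u), fun u hu v hv => ?_, ?_⟩
  · exact hg.isometricOnFaces u hu v hv fun i hi => absurd (Finset.mem_univ i) hi
  · rintro _ ⟨u, -, rfl⟩
    exact ⟨g u, hg.mem u, rfl⟩

end Counting

theorem card_pow_le_of_coloring {ι κ Λ C : Type*} [Fintype ι] [Fintype κ]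
    [AddRightCancelMonoid Λ] [Fintype C] {pos : Λ →+ ℝ} {d : ι → ℝ} {e : ι → Λ}
    {F F' : Finset Λ} (hd : ∀ i, 0 ≤ d i) (he : ∀ i, pos (e i) = d i)
    (hFF' : ∀ s ∈ F, s ∈ F' ∧ ∀ i, s + e i ∈ F') (c : (κ → ℝ) → C)
    (hc : ∀ q, ¬ HasCopy (hyperrectangle d) {x | c x = q}) :
    (2 * F.card) ^ Fintype.card κ ≤ F'.card ^ Fintype.card κ *
      (Fintype.card κ * (2 * F.card) + 1) ^ Fintype.card ι * Fintype.card C := by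
  classical
  rw [← card_wordsOn, ← Finset.card_univ (α := C)]
  refine Finset.card_le_mul_card_image_of_maps_to (f := fun w => c (wordPoint pos w))
    (fun _ _ => Finset.mem_univ _) _ fun q _ => ?_
  by_contra! hlt
  obtain ⟨f, hf, hfA⟩ := hasCopy_hyperrectangle_of_lt_card hd he hFF' (Finset.filter_subset _ _) hlt
  refine hc q ⟨f, hf, hfA.trans ?_⟩
  rintro _ ⟨w, hw, rfl⟩
  exact (Finset.mem_filter.1 hw).2

theorem pow_le_chrom_hyperrectangle_mul {ι : Type*} [Fintype ι] {d : ι → ℝ}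
    (hd : ∀ i, 0 ≤ d i) (hd' : (hyperrectangle d).Nontrivial) (L n : ℕ) :
    (2 * ((L : ℝ) / (L + 1)) ^ Fintype.card ι) ^ n ≤
      chrom (hyperrectangle d) n * (n * (2 * L ^ Fintype.card ι) + 1) ^ Fintype.card ι := by
  classical
  obtain ⟨c, hc⟩ := exists_chrom_coloring hd' n
  let grid (N : ℕ) : Finset (ι → ℕ) := Fintype.piFinset fun _ => Finset.range N
  have hgrid : ∀ s ∈ grid L, s ∈ grid (L + 1) ∧ ∀ i, s + Pi.single i 1 ∈ grid (L + 1) := by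
    simp only [grid, Fintype.mem_piFinset, Finset.mem_range, Pi.add_apply]
    refine fun s hs => ⟨fun j => (hs j).trans (Nat.lt_succ_self L), fun i j => ?_⟩
    have hij : (Pi.single i 1 : ι → ℕ) j ≤ 1 := by
      rw [Pi.single_apply]; split_ifs <;> simp
    exact add_lt_add_of_lt_of_le (hs j) hij
  have hcard := card_pow_le_of_coloring
    (pos := (Fintype.linearCombination ℕ d).toAddMonoidHom) hd
    (fun i => by simp [Fintype.linearCombination_apply_single]) hgrid c hc
  simp only [grid, Fintype.card_piFinset, Finset.card_range, Finset.prod_const, Finset.card_univ,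
    Fintype.card_fin] at hcard
  have hK : (0 : ℝ) < (((L : ℝ) + 1) ^ Fintype.card ι) ^ n := by positivity
  rw [div_pow, ← mul_div_assoc, div_pow, div_le_iff₀ hK]
  calc (2 * (L : ℝ) ^ Fintype.card ι) ^ n
      ≤ ((L + 1) ^ Fintype.card ι) ^ n * (n * (2 * L ^ Fintype.card ι) + 1) ^ Fintype.card ι *
        chrom (hyperrectangle d) n := mod_cast hcard
    _ = _ := by ring

section Growth

open Asymptotics

variable {f g : ℕ → ℝ} {a b : ℝ}

theorem tendsto_rpow_one_div_of_pow_bounds (ha : 0 < a) (hupper : ∀ᶠ n in atTop, f n ≤ a ^ n)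
    (hlower : ∀ b, 0 < b → b < a → ∀ᶠ n in atTop, b ^ n ≤ f n) :
    Tendsto (fun n : ℕ => f n ^ (1 / (n : ℝ))) atTop (nhds a) := by
  have hroot : ∀ {b : ℝ} {n : ℕ}, 0 < b → n ≠ 0 → (b ^ n) ^ (1 / (n : ℝ)) = b :=
    fun hb hn => by rw [one_div, Real.pow_rpow_inv_natCast hb.le hn]
  refine tendsto_order.2 ⟨fun l hl => ?_, fun u hu => ?_⟩
  · obtain ⟨b, hlb, hba⟩ := exists_between (max_lt hl ha)
    have hb : 0 < b := (le_max_right l 0).trans_lt hlb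
    filter_upwards [hlower b hb hba, eventually_ne_atTop 0] with n hn hn0
    calc l < b := (le_max_left l 0).trans_lt hlb
      _ = (b ^ n) ^ (1 / (n : ℝ)) := (hroot hb hn0).symm
      _ ≤ f n ^ (1 / (n : ℝ)) := by gcongr
  · filter_upwards [hupper, hlower (a / 2) (half_pos ha) (half_lt_self ha),
      eventually_ne_atTop 0] with n hn hn' hn0
    have hfn : 0 ≤ f n := le_trans (by positivity) hn'
    calc f n ^ (1 / (n : ℝ)) ≤ (a ^ n) ^ (1 / (n : ℝ)) := by gcongr
      _ = a := hroot ha hn0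
      _ < u := hu

theorem eventually_pow_le_of_pow_le_mul {k : ℕ} (hb : 0 < b) (hba : b < a)
    (hg : g =O[atTop] fun n => (n : ℝ) ^ k) (hf : ∀ n, 0 ≤ f n) (h : ∀ n, a ^ n ≤ f n * g n) :
    ∀ᶠ n in atTop, b ^ n ≤ f n := by
  have ha : 0 < a := hb.trans hba
  have hsmall := hg.trans_isLittleO
    (isLittleO_pow_const_const_pow_of_one_lt (R := ℝ) k ((one_lt_div hb).2 hba))
  filter_upwards [hsmall.bound one_pos] with n hn
  have hgn : g n ≤ (a / b) ^ n := by
    simpa [abs_of_pos ha, abs_of_pos hb] using (le_abs_self _).trans hn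
  have hmul : a ^ n ≤ f n * (a ^ n / b ^ n) := by
    rw [← div_pow]
    exact (h n).trans (mul_le_mul_of_nonneg_left hgn (hf n))
  rwa [mul_div_left_comm, le_mul_iff_one_le_right (by positivity), one_le_div (by positivity)]
    at hmul

theorem isBigO_natCast_mul_add_one_pow (s : ℝ) (k : ℕ) :
    (fun n : ℕ => ((n : ℝ) * s + 1) ^ k) =O[atTop] fun n => (n : ℝ) ^ k := by
  refine IsBigO.pow (IsBigO.add ?_ ?_) k
  · simpa only [mul_comm] using (isBigO_refl _ _).const_mul_left s
  · exact ((isLittleO_const_id_atTop (1 : ℝ)).comp_tendsto tendsto_natCast_atTop_atTop).isBigO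

theorem exists_lt_mul_div_add_one_pow (k : ℕ) (hba : b < a) :
    ∃ L : ℕ, b < a * ((L : ℝ) / (L + 1)) ^ k := by
  have hlim : Tendsto (fun L : ℕ => a * ((L : ℝ) / (L + 1)) ^ k) atTop (nhds a) := by
    simpa using ((tendsto_natCast_div_add_atTop (1 : ℝ)).pow k).const_mul a
  exact (hlim.eventually_const_lt hba).exists

end Growth

/-- A hyperrectangle `H`, i.e. the Cartesian product of `m` two-point spaces with
distances `d i > 0`, realised inside `ℝ^m` with the max metric, satisfies
`χ(ℝ^n_∞, H)^(1/n) → 2` as `n → ∞`. -/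
theorem chi_hyperrectangle (m : ℕ) (hm : 0 < m) (d : Fin m → ℝ) (hd : ∀ i, 0 < d i) :
    Tendsto
      (fun n : ℕ => (chrom {x : Fin m → ℝ | ∀ i, x i = 0 ∨ x i = d i} n : ℝ) ^ (1 / (n : ℝ)))
      atTop (nhds 2) := by
  have hH : (hyperrectangle d).Nontrivial := hyperrectangle_nontrivial (hd ⟨0, hm⟩).ne'
  refine tendsto_rpow_one_div_of_pow_bounds (f := fun n => chrom (hyperrectangle d) n) two_pos
    (.of_forall fun n => mod_cast chrom_le_two_pow hH n) fun b hb hb2 => ?_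
  obtain ⟨L, hL⟩ := exists_lt_mul_div_add_one_pow m hb2
  refine eventually_pow_le_of_pow_le_mul hb hL
    (isBigO_natCast_mul_add_one_pow (2 * (L : ℝ) ^ m) m) (fun n => Nat.cast_nonneg _) fun n => ?_
  simpa only [Fintype.card_fin] using
    pow_le_chrom_hyperrectangle_mul (fun i => (hd i).le) hH L n
end
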